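/- arXiv:2604.07227 — 3 statements merged into one kernel-verified Lean document; each statement's English description precedes it below -/
import Mathlib

section
/- Let S be the usual step-reinforced random walk on the additive group (ℤ₂, +) with reinforcement parameter α ∈ (0,1) and step distribution μ given by μ(0) = μ(1) = 1/2. Then for every n ≥ 1: ℙ(S_{2n−1} = 0) = 1/2, and e^{−C(1−α)n}·αⁿ ≤ 2ℙ(S_{2n} = 0) − 1 ≤ αⁿ, where C is a positive constant not depending on α and n. In particular, for every n ≥ 1, lim_{α→0⁺} log(2ℙ(S_{2n}=0) − 1)/log α = n and lim_{α→1⁻} log(1 − ℙ(S_{2n}=0))/log(1−α) = 1. -/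
open MeasureTheory ProbabilityTheory Filter
open scoped ENNReal NNReal Topology

namespace SRRW

variable {Ω : Type*} [MeasurableSpace Ω] {V : Type*} [AddCommGroup V] [MeasurableSpace V]

/-- The family combining `(ξ_n)`, `(u_n)` and `(g_n)`, with values in the common
measurable space `Bool ⊕ ℕ ⊕ V`. -/
def fam (ξ : ℕ → Ω → Bool) (u : ℕ → Ω → ℕ) (g : ℕ → Ω → V) :
    (ℕ ⊕ ℕ ⊕ ℕ) → Ω → (Bool ⊕ ℕ ⊕ V)
  | .inl n => fun ω => .inl (ξ n ω)
  | .inr (.inl n) => fun ω => .inr (.inl (u n ω))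
  | .inr (.inr n) => fun ω => .inr (.inr (g n ω))

/-- The driving randomness of a (generalized) step-reinforced random walk:
`(ξ_n)_{n ≥ 2}` are i.i.d. Bernoulli(α), `(u_n)_{n ≥ 2}` are independent with `u_n`
uniform on `{1, …, n-1}`, `(g_n)_{n ≥ 1}` are i.i.d. with law `μ` (the fresh steps),
and all of them are jointly independent. -/
structure IsDriving (P : Measure Ω) (α : ℝ) (μ : Measure V)
    (ξ : ℕ → Ω → Bool) (u : ℕ → Ω → ℕ) (g : ℕ → Ω → V) : Prop where
  meas_ξ : ∀ n, Measurable (ξ n)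
  meas_u : ∀ n, Measurable (u n)
  meas_g : ∀ n, Measurable (g n)
  ξ_law : ∀ n, 2 ≤ n → P {ω | ξ n ω = true} = ENNReal.ofReal α
  u_range : ∀ n, 2 ≤ n → ∀ ω, 1 ≤ u n ω ∧ u n ω < n
  u_law : ∀ n, 2 ≤ n → ∀ k, 1 ≤ k → k < n → P {ω | u n ω = k} = ((n - 1 : ℕ) : ℝ≥0∞)⁻¹
  g_law : ∀ n, 1 ≤ n → P.map (g n) = μ
  indep : iIndepFun (fam ξ u g) P

/-- `X` is the step sequence of a generalized step-reinforced random walk (written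
additively) with reinforcement parameter `α`, step distribution `μ` and transformations
`(T_n)_{n ≥ 2}`: `X_1 = g_1` and, for `n ≥ 2`, `X_n = T_n(X_{u_n})` if `ξ_n = 1` while
`X_n = g_n` (a fresh `μ`-distributed step) if `ξ_n = 0`.  Each `T_n` is a (random)
measurable transformation of `V` which is independent of `(ξ_k)_{k ≥ n}`, `(u_k)_{k ≥ n}`
and of the fresh steps `(g_k)_{k ≥ n}`. -/
def IsGenSRRWAdd (P : Measure Ω) (α : ℝ) (μ : Measure V)
    (T : ℕ → Ω → V → V) (X : ℕ → Ω → V) : Prop :=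
  ∃ ξ u g, IsDriving P α μ ξ u g ∧
    (∀ n, Measurable (Function.uncurry (T n))) ∧
    (∀ n, 2 ≤ n → IndepFun
      (fun ω (k : {k : ℕ // n ≤ k}) => (ξ k ω, u k ω, g k ω))
      (fun ω => T n ω) P) ∧
    (∀ ω, X 1 ω = g 1 ω) ∧
    (∀ n, 2 ≤ n → ∀ ω, X n ω = if ξ n ω then T n ω (X (u n ω) ω) else g n ω)

/-- `X` is the step sequence of a usual step-reinforced random walk (all transformations
are the identity). -/
def IsSRRWAdd (P : Measure Ω) (α : ℝ) (μ : Measure V) (X : ℕ → Ω → V) : Prop :=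
  IsGenSRRWAdd P α μ (fun _ _ => id) X

/-- The position of the walk: `S_n = X_1 + X_2 + ⋯ + X_n`. -/
def pos (X : ℕ → Ω → V) (n : ℕ) (ω : Ω) : V :=
  ∑ k ∈ Finset.range n, X (k + 1) ω

end SRRW

open SRRW

namespace SRRWProof

def tog (A : Finset ℕ) (k : ℕ) : Finset ℕ := if k ∈ A then A.erase k else insert k A

/-- Abstract recursion for the correlation functions. -/
structure Rec (α : ℝ) (e : Finset ℕ → ℝ) : Prop where
  empty : e ∅ = 1
  one : e {1} = 0
  step : ∀ m, 1 ≤ m → ∀ A ⊆ Finset.Icc 1 m,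
    e (insert (m+1) A) = α / m * ∑ k ∈ Finset.Icc 1 m, e (tog A k)

lemma tog_subset {A : Finset ℕ} {m k : ℕ} (hA : A ⊆ Finset.Icc 1 m) (hk : k ∈ Finset.Icc 1 m) :
    tog A k ⊆ Finset.Icc 1 m := by
  unfold tog
  split_ifs
  · exact (Finset.erase_subset _ _).trans hA
  · exact Finset.insert_subset hk hA

lemma tog_card (A : Finset ℕ) (k : ℕ) :
    (k ∈ A ∧ (tog A k).card + 1 = A.card) ∨ (k ∉ A ∧ (tog A k).card = A.card + 1) := by
  unfold tog
  split_ifs with h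
  · left; exact ⟨h, Finset.card_erase_add_one h⟩
  · right; exact ⟨h, Finset.card_insert_of_notMem h⟩

lemma sub_cases {A : Finset ℕ} {M : ℕ} (hA : A ⊆ Finset.Icc 1 (M+1)) :
    A ⊆ Finset.Icc 1 M ∨ ∃ B ⊆ Finset.Icc 1 M, A = insert (M+1) B ∧ A.card = B.card + 1 := by
  by_cases h : M+1 ∈ A
  · right
    refine ⟨A.erase (M+1), ?_, (Finset.insert_erase h).symm, (Finset.card_erase_add_one h).symm⟩
    intro x hx
    have h1 := Finset.mem_erase.1 hx
    have h2 := Finset.mem_Icc.1 (hA h1.2)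
    have := h1.1
    exact Finset.mem_Icc.2 ⟨h2.1, by omega⟩
  · left
    intro x hx
    have h2 := Finset.mem_Icc.1 (hA hx)
    have : x ≠ M+1 := by rintro rfl; exact h hx
    exact Finset.mem_Icc.2 ⟨h2.1, by omega⟩

lemma avg_le {m : ℕ} (hm : 1 ≤ m) {α c : ℝ} (hα : 0 ≤ α) {f : ℕ → ℝ}
    (h : ∀ k ∈ Finset.Icc 1 m, f k ≤ c) : α / m * ∑ k ∈ Finset.Icc 1 m, f k ≤ α * c := by
  have h1 := Finset.sum_le_card_nsmul _ _ _ h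
  simp only [Nat.card_Icc, Nat.add_sub_cancel, nsmul_eq_mul] at h1
  have hm' : (0:ℝ) < m := by exact_mod_cast hm
  calc α / m * ∑ k ∈ Finset.Icc 1 m, f k ≤ α / m * (m * c) := by gcongr
    _ = α * c := by field_simp

lemma le_avg {m : ℕ} (hm : 1 ≤ m) {α c : ℝ} (hα : 0 ≤ α) {f : ℕ → ℝ}
    (h : ∀ k ∈ Finset.Icc 1 m, c ≤ f k) : α * c ≤ α / m * ∑ k ∈ Finset.Icc 1 m, f k := by
  have h1 := Finset.card_nsmul_le_sum _ _ _ h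
  simp only [Nat.card_Icc, Nat.add_sub_cancel, nsmul_eq_mul] at h1
  have hm' : (0:ℝ) < m := by exact_mod_cast hm
  calc α * c = α / m * (m * c) := by field_simp
    _ ≤ α / m * ∑ k ∈ Finset.Icc 1 m, f k := by gcongr

section
variable {α : ℝ} {e : Finset ℕ → ℝ}

lemma Rec.odd (R : Rec α e) (M : ℕ) : ∀ A ⊆ Finset.Icc 1 M, Odd A.card → e A = 0 := by
  induction M with
  | zero =>
    intro A hA ho
    have : A = ∅ := by simpa using hA
    subst this; simp at ho
  | succ M ih =>
    intro A hA ho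
    rcases sub_cases hA with h | ⟨B, hB, rfl, hc⟩
    · exact ih A h ho
    rcases Nat.eq_zero_or_pos M with rfl | hM
    · have : B = ∅ := by simpa using hB
      subst this; simpa using R.one
    rw [R.step M hM B hB, Finset.sum_eq_zero, mul_zero]
    intro k hk
    refine ih _ (tog_subset hB hk) ?_
    rw [Nat.odd_iff] at *
    rcases tog_card B k with h | h <;> omega

lemma Rec.upper (R : Rec α e) (h0 : 0 ≤ α) (h1 : α ≤ 1) (M : ℕ) :
    ∀ A ⊆ Finset.Icc 1 M, ∀ k, A.card = 2 * k → e A ≤ α ^ k := by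
  induction M with
  | zero =>
    intro A hA k hk
    have : A = ∅ := by simpa using hA
    subst this
    have : k = 0 := by simpa using hk.symm
    subst this; simp [R.empty]
  | succ M ih =>
    intro A hA k hk
    rcases sub_cases hA with h | ⟨B, hB, rfl, hc⟩
    · exact ih A h k hk
    rcases Nat.eq_zero_or_pos M with rfl | hM
    · have : B = ∅ := by simpa using hB
      subst this; simp at hk; omega
    obtain ⟨j, rfl⟩ : ∃ j, k = j + 1 := ⟨k - 1, by omega⟩
    rw [R.step M hM B hB, pow_succ']
    refine avg_le hM h0 fun i hi => ?_
    rcases tog_card B i with h | h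
    · exact ih _ (tog_subset hB hi) j (by omega)
    · exact (ih _ (tog_subset hB hi) (j+1) (by omega)).trans (pow_le_pow_of_le_one h0 h1 (by omega))

lemma Rec.lower1 (R : Rec α e) (h0 : 0 ≤ α) (h1 : α ≤ 1) (M : ℕ) :
    ∀ A ⊆ Finset.Icc 1 M, Even A.card → α ^ M ≤ e A := by
  induction M with
  | zero =>
    intro A hA _
    have : A = ∅ := by simpa using hA
    subst this
    simp [R.empty]
  | succ M ih =>
    intro A hA hk
    rcases sub_cases hA with h | ⟨B, hB, rfl, hc⟩
    · exact (pow_le_pow_of_le_one h0 h1 (by omega)).trans (ih A h hk)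
    rcases Nat.eq_zero_or_pos M with rfl | hM
    · have : B = ∅ := by simpa using hB
      subst this; simp at hk
    rw [R.step M hM B hB, pow_succ']
    refine le_avg hM h0 fun i hi => ih _ (tog_subset hB hi) ?_
    rw [Nat.even_iff] at *
    rcases tog_card B i with h | h <;> omega

lemma Rec.lower2 (R : Rec α e) (h0 : 0 ≤ α) (h1 : α ≤ 1) (n : ℕ) (hn : 1 ≤ n) (k : ℕ) :
    ∀ A ⊆ Finset.Icc 1 (n + k), A.card = 2 * k →
      α ^ k * ∏ j ∈ Finset.range k, ((2 * j + 1 : ℝ) / (n + j)) ≤ e A := by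
  induction k with
  | zero =>
    intro A hA hk
    have : A = ∅ := by simpa using hk
    subst this
    simp [R.empty]
  | succ k ih =>
    intro A hA hk
    have hne : A.Nonempty := Finset.card_pos.1 (by omega)
    obtain ⟨m, hm⟩ : ∃ m, A.max' hne = m + 1 := by
      have := Finset.mem_Icc.1 (hA (A.max'_mem hne))
      exact ⟨A.max' hne - 1, by omega⟩
    have hmA : m + 1 ≤ n + (k+1) := by
      have := Finset.mem_Icc.1 (hA (A.max'_mem hne)); omega
    have hsub : A ⊆ Finset.Icc 1 (m+1) := fun x hx =>
      Finset.mem_Icc.2 ⟨(Finset.mem_Icc.1 (hA hx)).1, hm ▸ A.le_max' x hx⟩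
    rcases sub_cases hsub with h | ⟨B, hB, rfl, hc⟩
    · have := Finset.mem_Icc.1 (h (A.max'_mem hne)); omega
    have hBc := Finset.card_le_card hB
    simp only [Nat.card_Icc, Nat.add_sub_cancel] at hBc
    have hm1 : 1 ≤ m := by omega
    rw [R.step m hm1 B hB]
    set c := α ^ k * ∏ j ∈ Finset.range k, ((2 * j + 1 : ℝ) / (n + j)) with hcdef
    have hc0 : 0 ≤ c := by positivity
    have hs1 : (2*k+1 : ℝ) * c ≤ ∑ i ∈ B, e (tog B i) := by
      have h2 : ∀ i ∈ B, c ≤ e (tog B i) := by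
        intro i hi
        have hi' := tog_subset hB (hB hi)
        refine ih _ (hi'.trans (Finset.Icc_subset_Icc_right (by omega))) ?_
        rcases tog_card B i with h | h
        · omega
        · exact absurd hi h.1
      have h3 := Finset.card_nsmul_le_sum _ _ _ h2
      have : B.card = 2*k+1 := by omega
      rw [this, nsmul_eq_mul] at h3
      push_cast at h3; exact h3
    have hs2 : ∑ i ∈ B, e (tog B i) ≤ ∑ i ∈ Finset.Icc 1 m, e (tog B i) := by
      refine Finset.sum_le_sum_of_subset_of_nonneg hB fun i hi _ => ?_
      refine (pow_nonneg h0 m).trans (R.lower1 h0 h1 m _ (tog_subset hB hi) ?_)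
      rw [Nat.even_iff]
      rcases tog_card B i with h | h <;> omega
    have hmr : (0:ℝ) < m := by exact_mod_cast hm1
    have hmn : (m:ℝ) ≤ n + k := by exact_mod_cast (by omega : m ≤ n + k)
    rw [Finset.prod_range_succ, pow_succ']
    calc α * α ^ k * ((∏ j ∈ Finset.range k, ((2 * j + 1 : ℝ) / (n + j))) * ((2 * k + 1) / (n + k)))
        = α / (n + k) * ((2*k+1) * c) := by rw [hcdef]; ring
      _ ≤ α / m * ((2*k+1) * c) := by gcongr
      _ ≤ _ := by
        have := hs1.trans hs2
        gcongr

lemma prod_aux (n : ℕ) (hn : 1 ≤ n) :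
    2 * ∏ j ∈ Finset.range n, (n + j) = 2 ^ n * ∏ j ∈ Finset.range n, (2 * j + 1) := by
  induction n, hn using Nat.le_induction with
  | base => simp
  | succ n hn ih =>
    have h1 : ∏ j ∈ Finset.range (n+1), (n + j) = n * ∏ j ∈ Finset.range n, (n + 1 + j) := by
      rw [Finset.prod_range_succ']
      simp only [add_zero, mul_comm, add_assoc, add_comm 1]
    rw [Finset.prod_range_succ] at h1
    rw [Finset.prod_range_succ, Finset.prod_range_succ _ n]
    apply Nat.eq_of_mul_eq_mul_left hn
    calc n * (2 * ((∏ j ∈ Finset.range n, (n + 1 + j)) * (n + 1 + n)))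
        = 2 * (n * (∏ j ∈ Finset.range n, (n + 1 + j))) * (n + 1 + n) := by ring
      _ = (2 * ∏ j ∈ Finset.range n, (n + j)) * (n + n) * (n + 1 + n) := by rw [← h1]; ring
      _ = _ := by rw [ih]; ring

lemma prod_lower (n : ℕ) (hn : 1 ≤ n) :
    (1/2 : ℝ) ^ n ≤ ∏ j ∈ Finset.range n, ((2 * j + 1 : ℝ) / (n + j)) := by
  have h := prod_aux n hn
  have h' : 2 * ∏ j ∈ Finset.range n, ((n:ℝ) + j) = 2 ^ n * ∏ j ∈ Finset.range n, (2 * (j:ℝ) + 1) := by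
    exact_mod_cast h
  have hn' : (0:ℝ) < n := by exact_mod_cast hn
  have hp : 0 < ∏ j ∈ Finset.range n, ((n:ℝ) + j) := Finset.prod_pos fun j _ => by positivity
  rw [Finset.prod_div_distrib, le_div_iff₀ hp, div_pow, one_pow, div_mul_eq_mul_div,
    div_le_iff₀ (by positivity)]
  linarith

lemma Rec.exp_lower (R : Rec α e) (h0 : 0 < α) (h1 : α < 1) (n : ℕ) (hn : 1 ≤ n) :
    Real.exp (-2 * (1 - α) * n) * α ^ n ≤ e (Finset.Icc 1 (2*n)) := by
  have hex : Real.exp (-2 * (1 - α) * n) = Real.exp (-2 * (1 - α)) ^ n := by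
    rw [← Real.exp_nat_mul]; ring_nf
  rw [hex, ← mul_pow]
  rcases le_total α (1/2) with h | h
  · have h2 := R.lower2 h0.le h1.le n hn n (Finset.Icc 1 (2*n)) (by rw [two_mul]) (by simp)
    refine le_trans ?_ h2
    rw [mul_comm, mul_pow]
    refine mul_le_mul_of_nonneg_left (le_trans ?_ (prod_lower n hn)) (by positivity)
    refine pow_le_pow_left₀ (Real.exp_pos _).le ?_ n
    calc Real.exp (-2 * (1 - α)) ≤ Real.exp (-1) := Real.exp_le_exp.2 (by linarith)
      _ ≤ 1/2 := by
        rw [Real.exp_neg, one_div]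
        exact inv_anti₀ (by norm_num) (by linarith [Real.add_one_le_exp (1:ℝ)])
  · have h2 := R.lower1 h0.le h1.le (2*n) (Finset.Icc 1 (2*n)) subset_rfl (by simp)
    refine le_trans ?_ h2
    rw [pow_mul]
    refine pow_le_pow_left₀ (by positivity) ?_ n
    rw [pow_two]
    refine mul_le_mul_of_nonneg_right ?_ h0.le
    rw [← Real.le_log_iff_exp_le h0]
    have := Real.one_sub_inv_le_log_of_pos h0
    refine le_trans ?_ this
    have h3 : 1 - α⁻¹ = -(1-α) * α⁻¹ := by field_simp; ring
    have h4 : α⁻¹ ≤ 2 := by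
      rw [inv_le_comm₀ h0 (by norm_num)]; linarith
    rw [h3]; nlinarith
end

lemma lim0 (n : ℕ) (a : ℝ → ℝ)
    (h : ∀ α ∈ Set.Ioo (0:ℝ) 1, Real.exp (-2 * (1 - α) * n) * α ^ n ≤ a α ∧ a α ≤ α ^ n) :
    Tendsto (fun α => Real.log (a α) / Real.log α) (𝓝[>] 0) (𝓝 n) := by
  have hmem : ∀ᶠ α : ℝ in 𝓝[>] 0, α ∈ Set.Ioo (0:ℝ) 1 :=
    Ioo_mem_nhdsGT one_pos
  have hl := Real.tendsto_log_nhdsGT_zero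
  have hup : Tendsto (fun α : ℝ => (n:ℝ) + (-2 * n) / Real.log α) (𝓝[>] 0) (𝓝 n) := by
    simpa using (tendsto_const_nhds (x := (n:ℝ))).add (hl.const_div_atBot (-2 * (n:ℝ)))
  refine tendsto_of_tendsto_of_tendsto_of_le_of_le' tendsto_const_nhds hup ?_ ?_
  · filter_upwards [hmem] with α hα
    obtain ⟨h1, h2⟩ := h α hα
    have hpos : 0 < a α := lt_of_lt_of_le (by have := hα.1; positivity) h1
    have hlog := Real.log_neg hα.1 hα.2
    rw [le_div_iff_of_neg hlog, ← Real.log_pow]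
    exact Real.log_le_log hpos h2
  · filter_upwards [hmem] with α hα
    obtain ⟨h1, h2⟩ := h α hα
    have hlog := Real.log_neg hα.1 hα.2
    have hα0 := hα.1
    have h3 := Real.log_le_log (by positivity) h1
    rw [Real.log_mul (by positivity) (by positivity), Real.log_exp, Real.log_pow] at h3
    rw [div_le_iff_of_neg hlog, add_mul, div_mul_cancel₀ _ hlog.ne]
    have : (0:ℝ) ≤ n * α := by positivity
    nlinarith

lemma lim1 (n : ℕ) (hn : 1 ≤ n) (p : ℝ → ℝ)
    (h : ∀ α ∈ Set.Ioo (0:ℝ) 1, α ^ (2*n) ≤ 2 * p α - 1 ∧ 2 * p α - 1 ≤ α ^ n) :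
    Tendsto (fun α => Real.log (1 - p α) / Real.log (1 - α)) (𝓝[<] 1) (𝓝 1) := by
  have hmem : ∀ᶠ α : ℝ in 𝓝[<] 1, α ∈ Set.Ioo (0:ℝ) 1 :=
    Ioo_mem_nhdsLT one_pos
  have hs : Tendsto (fun α : ℝ => 1 - α) (𝓝[<] 1) (𝓝[>] 0) := by
    refine tendsto_nhdsWithin_iff.2 ⟨?_, ?_⟩
    · have : Tendsto (fun α : ℝ => 1 - α) (𝓝 1) (𝓝 (1 - 1)) := by
        exact (continuous_const.sub continuous_id).tendsto 1
      rw [sub_self] at this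
      exact this.mono_left nhdsWithin_le_nhds
    · filter_upwards [hmem] with α hα
      exact sub_pos.2 hα.2
  have hl := Real.tendsto_log_nhdsGT_zero.comp hs
  have hlim : ∀ c : ℝ, Tendsto (fun α : ℝ => 1 + c / Real.log (1 - α)) (𝓝[<] 1) (𝓝 1) := by
    intro c
    simpa using (tendsto_const_nhds (x := (1:ℝ))).add (hl.const_div_atBot c)
  have key : ∀ α ∈ Set.Ioo (0:ℝ) 1, (1/2) * (1 - α) ≤ 1 - p α ∧ 1 - p α ≤ n * (1 - α) := by
    intro α hα
    obtain ⟨h1, h2⟩ := h α hα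
    have h3 : α ^ n ≤ α := by
      simpa using pow_le_pow_of_le_one hα.1.le hα.2.le hn
    have h4 := one_add_mul_le_pow (a := α - 1) (by linarith [hα.1]) (2*n)
    rw [add_sub_cancel] at h4
    push_cast at h4
    constructor
    · linarith
    · nlinarith
  have hn' : (0:ℝ) < n := by exact_mod_cast hn
  refine tendsto_of_tendsto_of_tendsto_of_le_of_le' (hlim (Real.log n)) (hlim (Real.log (1/2))) ?_ ?_
  · filter_upwards [hmem] with α hα
    obtain ⟨h1, h2⟩ := key α hα
    have h5 : 0 < 1 - α := sub_pos.2 hα.2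
    have hlog := Real.log_neg h5 (by linarith [hα.1])
    rw [le_div_iff_of_neg hlog, add_mul, div_mul_cancel₀ _ hlog.ne, one_mul, add_comm,
      ← Real.log_mul hn'.ne' h5.ne']
    exact Real.log_le_log (by linarith) h2
  · filter_upwards [hmem] with α hα
    obtain ⟨h1, h2⟩ := key α hα
    have h5 : 0 < 1 - α := sub_pos.2 hα.2
    have hlog := Real.log_neg h5 (by linarith [hα.1])
    rw [div_le_iff_of_neg hlog, add_mul, div_mul_cancel₀ _ hlog.ne, one_mul, add_comm,
      ← Real.log_mul (by norm_num) h5.ne']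
    exact Real.log_le_log (by linarith) h1

end SRRWProof

namespace SRRWProof

open Classical in
/-- The nontrivial character of `ZMod 2`. -/
noncomputable def chi (x : ZMod 2) : ℝ := if x = 0 then 1 else -1

lemma chi_zero : chi 0 = 1 := by simp [chi]

lemma chi_one : chi 1 = -1 := by simp [chi]

lemma chi_add (x y : ZMod 2) : chi (x + y) = chi x * chi y := by
  have h2 : (1 : ZMod 2) + 1 = 0 := by decide
  have h : ∀ x : ZMod 2, x = 0 ∨ x = 1 := by decide
  rcases h x with rfl | rfl <;> rcases h y with rfl | rfl <;> simp [chi_zero, chi_one, h2]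

lemma chi_sq (x : ZMod 2) : chi x * chi x = 1 := by
  unfold chi; split_ifs <;> norm_num

lemma abs_chi (x : ZMod 2) : |chi x| = 1 := by
  unfold chi; split_ifs <;> norm_num

lemma chi_sum {ι : Type*} (s : Finset ι) (f : ι → ZMod 2) :
    chi (∑ i ∈ s, f i) = ∏ i ∈ s, chi (f i) := by
  classical
  induction s using Finset.induction_on with
  | empty => simp [chi_zero]
  | insert a s ha ih => rw [Finset.sum_insert ha, Finset.prod_insert ha, chi_add, ih]

lemma meas_random_index {Ω' V' : Type*} [MeasurableSpace Ω'] [MeasurableSpace V']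
    {u : Ω' → ℕ} {Y : ℕ → Ω' → V'} (hu : Measurable u) (hY : ∀ k, Measurable (Y k)) :
    Measurable (fun ω => Y (u ω) ω) := by
  have : Measurable (fun p : ℕ × Ω' => Y p.1 p.2) := measurable_from_prod_countable_right hY
  exact this.comp (hu.prodMk measurable_id)

section
variable {Ω : Type*} [mΩ : MeasurableSpace Ω] [mZ : MeasurableSpace (ZMod 2)]

/-- The sigma-algebra generated by part of the driving family. -/
def sig (ξ : ℕ → Ω → Bool) (u : ℕ → Ω → ℕ) (g : ℕ → Ω → ZMod 2) (S : Set (ℕ ⊕ ℕ ⊕ ℕ)) :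
    MeasurableSpace Ω :=
  ⨆ i ∈ S, MeasurableSpace.comap (fam ξ u g i) inferInstance

/-- The time index. -/
def idx : ℕ ⊕ ℕ ⊕ ℕ → ℕ := Sum.elim id (Sum.elim id id)

variable {P : Measure Ω} {α : ℝ} {μ : Measure (ZMod 2)}
  {ξ : ℕ → Ω → Bool} {u : ℕ → Ω → ℕ} {g : ℕ → Ω → ZMod 2}

lemma meas_fam (D : IsDriving P α μ ξ u g) (i) : Measurable (fam ξ u g i) := by
  rcases i with n | n | n
  · exact measurable_inl.comp (D.meas_ξ n)
  · exact measurable_inr.comp (measurable_inl.comp (D.meas_u n))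
  · exact measurable_inr.comp (measurable_inr.comp (D.meas_g n))

lemma sig_le (D : IsDriving P α μ ξ u g) (S) : sig ξ u g S ≤ mΩ :=
  iSup₂_le fun i _ => (meas_fam D i).comap_le

lemma sig_mono {S T : Set (ℕ ⊕ ℕ ⊕ ℕ)} (h : S ⊆ T) : sig ξ u g S ≤ sig ξ u g T :=
  biSup_mono h

lemma sig_fam {S : Set (ℕ ⊕ ℕ ⊕ ℕ)} {i} (hi : i ∈ S) : Measurable[sig ξ u g S] (fam ξ u g i) :=
  Measurable.mono (comap_measurable _)
    (le_iSup₂ (f := fun i (_ : i ∈ S) => MeasurableSpace.comap (fam ξ u g i) inferInstance) i hi)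
    le_rfl

lemma sig_ξ {S : Set (ℕ ⊕ ℕ ⊕ ℕ)} {n} (hi : .inl n ∈ S) : Measurable[sig ξ u g S] (ξ n) := by
  have h : Measurable (Sum.elim id (fun _ => true) : Bool ⊕ ℕ ⊕ ZMod 2 → Bool) :=
    measurable_id.sumElim measurable_const
  exact h.comp (sig_fam (ξ := ξ) (u := u) (g := g) hi)

lemma sig_u {S : Set (ℕ ⊕ ℕ ⊕ ℕ)} {n} (hi : .inr (.inl n) ∈ S) :
    Measurable[sig ξ u g S] (u n) := by
  have h : Measurable (Sum.elim (fun _ => 0) (Sum.elim id (fun _ => 0)) : Bool ⊕ ℕ ⊕ ZMod 2 → ℕ) :=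
    measurable_const.sumElim (measurable_id.sumElim measurable_const)
  exact h.comp (sig_fam (ξ := ξ) (u := u) (g := g) hi)

lemma sig_g {S : Set (ℕ ⊕ ℕ ⊕ ℕ)} {n} (hi : .inr (.inr n) ∈ S) :
    Measurable[sig ξ u g S] (g n) := by
  have h : Measurable
      (Sum.elim (fun _ => 0) (Sum.elim (fun _ => 0) id) : Bool ⊕ ℕ ⊕ ZMod 2 → ZMod 2) :=
    measurable_const.sumElim (measurable_const.sumElim measurable_id)
  exact h.comp (sig_fam (ξ := ξ) (u := u) (g := g) hi)

lemma indep_int (D : IsDriving P α μ ξ u g) {S T : Set (ℕ ⊕ ℕ ⊕ ℕ)} (hST : Disjoint S T)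
    {f h : Ω → ℝ} (hf : Measurable[sig ξ u g S] f) (hh : Measurable[sig ξ u g T] h) :
    ∫ ω, f ω * h ω ∂P = (∫ ω, f ω ∂P) * ∫ ω, h ω ∂P := by
  have h1 := indep_iSup_of_disjoint (fun i => (meas_fam D i).comap_le)
    ((iIndepFun_iff_iIndep _ _ _).1 D.indep) hST
  have h2 : IndepFun f h P := by
    rw [IndepFun_iff_Indep]
    exact indep_of_indep_of_le h1 hf.comap_le hh.comap_le
  exact h2.integral_fun_mul_eq_mul_integral
    (hf.mono (sig_le D S) le_rfl).aestronglyMeasurable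
    (hh.mono (sig_le D T) le_rfl).aestronglyMeasurable

variable {X : ℕ → Ω → ZMod 2}

lemma meas_X (D : IsDriving P α μ ξ u g) (h1 : ∀ ω, X 1 ω = g 1 ω)
    (hX : ∀ n, 2 ≤ n → ∀ ω, X n ω = if ξ n ω then X (u n ω) ω else g n ω) (n : ℕ) :
    1 ≤ n → Measurable[sig ξ u g {i | idx i ≤ n}] (X n) := by
  induction n using Nat.strong_induction_on with
  | _ n ih =>
    intro hn
    rcases hn.eq_or_lt with rfl | hn2
    · rw [show X 1 = g 1 from funext h1]
      exact sig_g (by simp [idx])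
    · let Y : ℕ → Ω → ZMod 2 := fun k => if 1 ≤ k ∧ k < n then X k else fun _ => 0
      have hY : ∀ k, Measurable[sig ξ u g {i | idx i ≤ n}] (Y k) := by
        intro k
        by_cases hk : 1 ≤ k ∧ k < n
        · simp only [Y, if_pos hk]
          exact (ih k hk.2 hk.1).mono (sig_mono fun i hi => le_trans hi hk.2.le) le_rfl
        · simp only [Y, if_neg hk]
          exact measurable_const
      have hXe : X n = fun ω => if ξ n ω = true then Y (u n ω) ω else g n ω := by
        funext ω
        rw [hX n hn2 ω]
        simp only [Y, if_pos (D.u_range n hn2 ω)]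
      rw [hXe]
      have hξ : Measurable[sig ξ u g {i | idx i ≤ n}] (ξ n) := sig_ξ (by simp [idx])
      refine Measurable.ite (hξ (measurableSet_singleton true)) ?_ (sig_g (by simp [idx]))
      exact @meas_random_index _ _ (sig ξ u g {i | idx i ≤ n}) _ _ _ (sig_u (by simp [idx])) hY

/-- The correlation functions. -/
noncomputable def corr (P : Measure Ω) (X : ℕ → Ω → ZMod 2) (A : Finset ℕ) : ℝ :=
  ∫ ω, ∏ i ∈ A, chi (X i ω) ∂P

lemma prod_tog (A : Finset ℕ) (k : ℕ) (f : ℕ → ℝ) (hf : f k * f k = 1) :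
    f k * ∏ i ∈ A, f i = ∏ i ∈ tog A k, f i := by
  unfold tog
  split_ifs with h
  · rw [← Finset.mul_prod_erase A f h, ← mul_assoc, hf, one_mul]
  · rw [Finset.prod_insert h]

lemma int_chi_g [IsProbabilityMeasure P] [MeasurableSingletonClass (ZMod 2)]
    (hμ0 : μ {(0 : ZMod 2)} = 1 / 2) (hμ1 : μ {(1 : ZMod 2)} = 1 / 2) (D : IsDriving P α μ ξ u g)
    (n : ℕ) (hn : 1 ≤ n) : ∫ ω, chi (g n ω) ∂P = 0 := by
  have hc : Measurable chi := measurable_of_countable _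
  have : IsProbabilityMeasure μ := by
    rw [← D.g_law n hn]; exact Measure.isProbabilityMeasure_map (D.meas_g n).aemeasurable
  rw [← integral_map (D.meas_g n).aemeasurable (f := chi) hc.aestronglyMeasurable, D.g_law n hn,
    integral_fintype (Integrable.of_finite)]
  have hu : (Finset.univ : Finset (ZMod 2)) = {0, 1} := by decide
  rw [hu, Finset.sum_pair (by decide), chi_zero, chi_one]
  simp [measureReal_def, hμ0, hμ1]

lemma corr_rec [IsProbabilityMeasure P] [MeasurableSingletonClass (ZMod 2)]
    (hμ0 : μ {(0 : ZMod 2)} = 1 / 2) (hμ1 : μ {(1 : ZMod 2)} = 1 / 2) (D : IsDriving P α μ ξ u g)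
    (hα : 0 ≤ α) (h1 : ∀ ω, X 1 ω = g 1 ω)
    (hX : ∀ n, 2 ≤ n → ∀ ω, X n ω = if ξ n ω then X (u n ω) ω else g n ω) :
    Rec α (corr P X) := by
  have hc : Measurable chi := measurable_of_countable _
  refine ⟨by simp [corr], ?_, ?_⟩
  · simp only [corr, Finset.prod_singleton, h1]
    exact int_chi_g hμ0 hμ1 D 1 le_rfl
  intro m hm A hA
  let past : Set (ℕ ⊕ ℕ ⊕ ℕ) := {i | idx i ≤ m}
  have hXp : ∀ i ∈ Finset.Icc 1 m, Measurable[sig ξ u g past] (fun ω => chi (X i ω)) := by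
    intro i hi
    have hi := Finset.mem_Icc.1 hi
    have := (meas_X D h1 hX i hi.1).mono
      (sig_mono (T := past) fun j hj => le_trans hj hi.2) le_rfl
    exact hc.comp this
  have hprod : ∀ B ⊆ Finset.Icc 1 m,
      Measurable[sig ξ u g past] (fun ω => ∏ i ∈ B, chi (X i ω)) := by
    intro B hB
    exact Finset.measurable_fun_prod B fun i hi => hXp i (hB hi)
  -- indicators
  let a : Ω → ℝ := fun ω => if ξ (m+1) ω = true then 1 else 0
  let a' : Ω → ℝ := fun ω => if ξ (m+1) ω = true then 0 else 1
  let b : ℕ → Ω → ℝ := fun k ω => if u (m+1) ω = k then 1 else 0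
  have hξm : ∀ S : Set (ℕ ⊕ ℕ ⊕ ℕ), .inl (m+1) ∈ S → Measurable[sig ξ u g S] a := by
    intro S hS
    have h := sig_ξ (ξ := ξ) (u := u) (g := g) hS
    exact Measurable.ite (h (measurableSet_singleton true)) measurable_const measurable_const
  have hξm' : ∀ S : Set (ℕ ⊕ ℕ ⊕ ℕ), .inl (m+1) ∈ S → Measurable[sig ξ u g S] a' := by
    intro S hS
    have h := sig_ξ (ξ := ξ) (u := u) (g := g) hS
    exact Measurable.ite (h (measurableSet_singleton true)) measurable_const measurable_const
  have hum : ∀ k, ∀ S : Set (ℕ ⊕ ℕ ⊕ ℕ), .inr (.inl (m+1)) ∈ S → Measurable[sig ξ u g S] (b k) := by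
    intro k S hS
    have h := sig_u (ξ := ξ) (u := u) (g := g) hS
    exact Measurable.ite (h (measurableSet_singleton k)) measurable_const measurable_const
  have hgm : ∀ S : Set (ℕ ⊕ ℕ ⊕ ℕ), .inr (.inr (m+1)) ∈ S →
      Measurable[sig ξ u g S] (fun ω => chi (g (m+1) ω)) := by
    intro S hS
    exact hc.comp (sig_g (ξ := ξ) (u := u) (g := g) hS)
  have hia : ∫ ω, a ω ∂P = α := by
    have hs : MeasurableSet {ω | ξ (m+1) ω = true} := D.meas_ξ (m+1) (measurableSet_singleton true)
    have : a = Set.indicator {ω | ξ (m+1) ω = true} 1 := by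
      funext ω; simp [a, Set.indicator]
    rw [this, integral_indicator_one hs, measureReal_def, D.ξ_law _ (by omega),
      ENNReal.toReal_ofReal hα]
  have hib : ∀ k ∈ Finset.Icc 1 m, ∫ ω, b k ω ∂P = (m:ℝ)⁻¹ := by
    intro k hk
    have hk := Finset.mem_Icc.1 hk
    have hs : MeasurableSet {ω | u (m+1) ω = k} := D.meas_u (m+1) (measurableSet_singleton k)
    have : b k = Set.indicator {ω | u (m+1) ω = k} 1 := by
      funext ω; simp [b, Set.indicator]
    rw [this, integral_indicator_one hs, measureReal_def, D.u_law _ (by omega) k hk.1 (by omega)]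
    simp
  let fut : Set (ℕ ⊕ ℕ ⊕ ℕ) := {i | idx i = m+1}
  have hdisj : Disjoint fut past := by
    rw [Set.disjoint_left]
    intro i hi hi'
    simp only [fut, past, Set.mem_setOf_eq] at hi hi'
    omega
  have hf1 : Sum.inl (m+1) ∈ fut := by simp [fut, idx]
  have hf2 : Sum.inr (Sum.inl (m+1)) ∈ fut := by simp [fut, idx]
  have hf3 : Sum.inr (Sum.inr (m+1)) ∈ fut := by simp [fut, idx]
  -- each term
  have hterm : ∀ k ∈ Finset.Icc 1 m,
      ∫ ω, (a ω * b k ω) * (∏ i ∈ tog A k, chi (X i ω)) ∂P = α / m * corr P X (tog A k) := by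
    intro k hk
    rw [indep_int D hdisj (f := fun ω => a ω * b k ω) ((hξm fut hf1).mul (hum k fut hf2)) (hprod _ (tog_subset hA hk)),
      indep_int D (S := {.inl (m+1)}) (T := {.inr (.inl (m+1))}) (by simp)
        (hξm _ rfl) (hum k _ rfl), hia, hib k hk, corr, div_eq_mul_inv]
  have hterm0 : ∫ ω, (a' ω * chi (g (m+1) ω)) * (∏ i ∈ A, chi (X i ω)) ∂P = 0 := by
    rw [indep_int D hdisj (f := fun ω => a' ω * chi (g (m+1) ω)) ((hξm' fut hf1).mul (hgm fut hf3)) (hprod _ hA),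
      indep_int D (S := {.inl (m+1)}) (T := {.inr (.inr (m+1))}) (by simp)
        (hξm' _ rfl) (hgm _ rfl), int_chi_g hμ0 hμ1 D (m+1) (by omega)]
    simp
  have hbprod : ∀ (B : Finset ℕ) ω, |∏ i ∈ B, chi (X i ω)| = 1 := by
    intro B ω
    rw [Finset.abs_prod]
    exact Finset.prod_eq_one fun i _ => abs_chi _
  have hint : ∀ k ∈ Finset.Icc 1 m,
      Integrable (fun ω => (a ω * b k ω) * (∏ i ∈ tog A k, chi (X i ω))) P := by
    intro k hk
    refine Integrable.of_bound (C := 1) ?_ (ae_of_all _ fun ω => ?_)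
    · exact ((((hξm fut hf1).mul (hum k fut hf2)).mono (sig_le D _) le_rfl).mul
        ((hprod _ (tog_subset hA hk)).mono (sig_le D _) le_rfl)).aestronglyMeasurable
    · rw [Real.norm_eq_abs, abs_mul, hbprod]
      simp only [a, b]; split_ifs <;> simp
  have hint0 : Integrable (fun ω => (a' ω * chi (g (m+1) ω)) * (∏ i ∈ A, chi (X i ω))) P := by
    refine Integrable.of_bound (C := 1) ?_ (ae_of_all _ fun ω => ?_)
    · exact ((((hξm' fut hf1).mul (hgm fut hf3)).mono (sig_le D _) le_rfl).mul
        ((hprod _ hA).mono (sig_le D _) le_rfl)).aestronglyMeasurable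
    · rw [Real.norm_eq_abs, abs_mul, hbprod, abs_mul, abs_chi]
      simp only [a']; split_ifs <;> simp
  have hmA : m + 1 ∉ A := fun h => by have := Finset.mem_Icc.1 (hA h); omega
  have hdecomp : ∀ ω, ∏ i ∈ insert (m+1) A, chi (X i ω) =
      (∑ k ∈ Finset.Icc 1 m, (a ω * b k ω) * (∏ i ∈ tog A k, chi (X i ω)))
        + (a' ω * chi (g (m+1) ω)) * (∏ i ∈ A, chi (X i ω)) := by
    intro ω
    rw [Finset.prod_insert hmA, hX (m+1) (by omega) ω]
    have hur := D.u_range (m+1) (by omega) ω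
    by_cases hξ : ξ (m+1) ω = true
    · simp only [a, a', b, hξ, if_true]
      rw [Finset.sum_eq_single (u (m+1) ω)]
      · simp only [if_true]
        rw [prod_tog A (u (m+1) ω) (fun i => chi (X i ω)) (chi_sq _)]
        ring
      · intro k _ hk
        rw [if_neg (Ne.symm hk)]; ring
      · intro h
        exact absurd (Finset.mem_Icc.2 ⟨hur.1, by omega⟩) h
    · simp [a, a', hξ]
  rw [corr]
  simp_rw [hdecomp]
  rw [integral_add (integrable_finsetSum _ hint) hint0, integral_finsetSum _ hint, hterm0,
    add_zero, Finset.sum_congr rfl hterm, ← Finset.mul_sum]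

lemma corr_pos [IsProbabilityMeasure P] [MeasurableSingletonClass (ZMod 2)]
    (hm : ∀ n, 1 ≤ n → Measurable (X n)) (n : ℕ) :
    corr P X (Finset.Icc 1 n) = 2 * (P {ω | pos X n ω = 0}).toReal - 1 := by
  have hpos : Measurable (pos X n) := by
    have : ∀ k, Measurable (X (k+1)) := fun k => hm _ (by omega)
    have hadd : Measurable (fun p : ZMod 2 × ZMod 2 => p.1 + p.2) := measurable_of_countable _
    induction n with
    | zero =>
      have h2 : pos X 0 = fun _ => 0 := by funext ω; simp [pos]
      rw [h2]; exact measurable_const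
    | succ n ih =>
      have h2 : pos X (n+1) = fun ω => pos X n ω + X (n+1) ω := by
        funext ω; simp [pos, Finset.sum_range_succ]
      rw [h2]
      exact hadd.comp (ih.prodMk (this n))
  have hs : MeasurableSet {ω | pos X n ω = 0} := hpos (measurableSet_singleton 0)
  have h1 : ∀ ω, ∏ i ∈ Finset.Icc 1 n, chi (X i ω) =
      2 * Set.indicator {ω | pos X n ω = 0} (1 : Ω → ℝ) ω - 1 := by
    intro ω
    have : ∏ i ∈ Finset.Icc 1 n, chi (X i ω) = chi (pos X n ω) := by
      rw [pos, chi_sum, Finset.range_eq_Ico,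
        Finset.prod_Ico_add' (fun i => chi (X i ω)) 0 n 1]
      rfl
    rw [this]
    by_cases h : pos X n ω = 0
    · simp [chi, h]; norm_num
    · simp [chi, h]
  rw [corr]
  simp_rw [h1]
  have hi : Integrable (Set.indicator {ω | pos X n ω = 0} (1 : Ω → ℝ)) P :=
    (integrable_const (1:ℝ)).indicator hs
  rw [integral_sub (hi.const_mul 2) (integrable_const _), integral_const_mul,
    integral_indicator_one hs, measureReal_def]
  simp

lemma main_rec [IsProbabilityMeasure P] [MeasurableSingletonClass (ZMod 2)]
    (hμ0 : μ {(0 : ZMod 2)} = 1 / 2) (hμ1 : μ {(1 : ZMod 2)} = 1 / 2) (hα : 0 ≤ α)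
    (h : IsSRRWAdd P α μ X) :
    Rec α (corr P X) ∧
      ∀ n, corr P X (Finset.Icc 1 n) = 2 * (P {ω | pos X n ω = 0}).toReal - 1 := by
  obtain ⟨ξ, u, g, D, _, _, h1, hX⟩ := h
  exact ⟨corr_rec hμ0 hμ1 D hα h1 hX,
    corr_pos fun n hn => (meas_X D h1 hX n hn).mono (sig_le D _) le_rfl⟩

end
end SRRWProof


/-- **The SRRW on the two-point group.**  Let `S` be the usual SRRW on `(ℤ₂, +)` with
reinforcement parameter `α ∈ (0,1)` and uniform step distribution.  Then
`ℙ(S_{2n-1} = 0) = 1/2`, and `e^{-C(1-α)n} αⁿ ≤ 2ℙ(S_{2n} = 0) - 1 ≤ αⁿ` for a constant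
`C > 0` independent of `α` and `n`; consequently, for each `n ≥ 1`,
`log(2ℙ(S_{2n}=0)-1)/log α → n` as `α → 0⁺` and
`log(1-ℙ(S_{2n}=0))/log(1-α) → 1` as `α → 1⁻`. -/
theorem srrw_two_point_group
    [MeasurableSpace (ZMod 2)] [MeasurableSingletonClass (ZMod 2)]
    {Ω : Type*} [MeasurableSpace Ω] (P : Measure Ω) [IsProbabilityMeasure P]
    (μ : Measure (ZMod 2)) [IsProbabilityMeasure μ]
    (hμ0 : μ {(0 : ZMod 2)} = 1 / 2) (hμ1 : μ {(1 : ZMod 2)} = 1 / 2)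
    (X : ℝ → ℕ → Ω → ZMod 2)
    (hX : ∀ α ∈ Set.Ioo (0 : ℝ) 1, IsSRRWAdd P α μ (X α)) :
    (∃ C : ℝ, 0 < C ∧ ∀ α ∈ Set.Ioo (0 : ℝ) 1, ∀ n : ℕ, 1 ≤ n →
      (P {ω | pos (X α) (2 * n - 1) ω = 0} = 1 / 2) ∧
      Real.exp (-C * (1 - α) * n) * α ^ n
        ≤ 2 * (P {ω | pos (X α) (2 * n) ω = 0}).toReal - 1 ∧
      2 * (P {ω | pos (X α) (2 * n) ω = 0}).toReal - 1 ≤ α ^ n) ∧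
    (∀ n : ℕ, 1 ≤ n →
      Tendsto
        (fun α : ℝ =>
          Real.log (2 * (P {ω | pos (X α) (2 * n) ω = 0}).toReal - 1) / Real.log α)
        (𝓝[>] (0 : ℝ)) (𝓝 (n : ℝ)) ∧
      Tendsto
        (fun α : ℝ =>
          Real.log (1 - (P {ω | pos (X α) (2 * n) ω = 0}).toReal) / Real.log (1 - α))
        (𝓝[<] (1 : ℝ)) (𝓝 (1 : ℝ))) := by
  have key := fun (α : ℝ) (hα : α ∈ Set.Ioo (0:ℝ) 1) =>
    SRRWProof.main_rec hμ0 hμ1 hα.1.le (hX α hα)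
  have hup : ∀ α ∈ Set.Ioo (0:ℝ) 1, ∀ n : ℕ,
      2 * (P {ω | pos (X α) (2 * n) ω = 0}).toReal - 1 ≤ α ^ n := by
    intro α hα n
    obtain ⟨R, h⟩ := key α hα
    rw [← h]
    exact R.upper hα.1.le hα.2.le (2*n) _ subset_rfl n (by simp)
  have hlo : ∀ α ∈ Set.Ioo (0:ℝ) 1, ∀ n : ℕ, 1 ≤ n → Real.exp (-2 * (1 - α) * n) * α ^ n ≤
      2 * (P {ω | pos (X α) (2 * n) ω = 0}).toReal - 1 := by
    intro α hα n hn
    obtain ⟨R, h⟩ := key α hα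
    rw [← h]
    exact R.exp_lower hα.1 hα.2 n hn
  have hlo1 : ∀ α ∈ Set.Ioo (0:ℝ) 1, ∀ n : ℕ, α ^ (2*n) ≤
      2 * (P {ω | pos (X α) (2 * n) ω = 0}).toReal - 1 := by
    intro α hα n
    obtain ⟨R, h⟩ := key α hα
    rw [← h]
    exact R.lower1 hα.1.le hα.2.le (2*n) _ subset_rfl (by simp)
  refine ⟨⟨2, two_pos, fun α hα n hn => ⟨?_, hlo α hα n hn, hup α hα n⟩⟩, fun n hn => ⟨?_, ?_⟩⟩
  · obtain ⟨R, h⟩ := key α hα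
    have h0 := R.odd (2*n-1) _ subset_rfl (by
      rw [Nat.card_Icc, Nat.odd_iff]; omega)
    rw [h] at h0
    have h1 : (P {ω | pos (X α) (2 * n - 1) ω = 0}).toReal = (1 / 2 : ℝ≥0∞).toReal := by
      simp; linarith
    exact (ENNReal.toReal_eq_toReal_iff' (measure_ne_top _ _) (by simp)).1 h1
  · exact SRRWProof.lim0 n (fun α => 2 * (P {ω | pos (X α) (2 * n) ω = 0}).toReal - 1)
      fun α hα => ⟨hlo α hα n hn, hup α hα n⟩
  · exact SRRWProof.lim1 n hn (fun α => (P {ω | pos (X α) (2 * n) ω = 0}).toReal)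
      fun α hα => ⟨hlo1 α hα n, hup α hα n⟩
end

section
/- Let S be the usual step-reinforced random walk on (ℤ₂, +) with reinforcement parameter α ∈ [0,1) and step distribution μ(0) = μ(1) = 1/2, and let (R_n)_{n≥1} be the elephant polynomials with the same parameter α. Then for every n ≥ 1, E[exp(iπ S_n)] = 2ℙ(S_n = 0) − 1 = iⁿ·R_n(0). -/
open MeasureTheory ProbabilityTheory Filter Polynomial
open scoped ENNReal NNReal Topology

/-- The elephant polynomials: `R_1(x) = x` and
`R_{n+1}(x) = x R_n(x) - (α/n)(1 - x²) R_n'(x)` for `n ≥ 1`. -/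
noncomputable def elephantPoly (α : ℝ) : ℕ → Polynomial ℝ
  | 0 => 1
  | 1 => Polynomial.X
  | n + 2 =>
      Polynomial.X * elephantPoly α (n + 1)
        - Polynomial.C (α / (n + 1)) *
            ((1 - Polynomial.X ^ 2) * Polynomial.derivative (elephantPoly α (n + 1)))

open SRRW

namespace SRRWAux

/-- The sign character of `ℤ₂`. -/
def sg (x : ZMod 2) : ℝ := if x = 0 then 1 else -1

lemma sg_add (x y : ZMod 2) : sg (x + y) = sg x * sg y := by
  have h : ∀ x y : ZMod 2, (x + y = 0 ↔ (x = 0 ↔ y = 0)) := by decide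
  unfold sg
  have := h x y
  by_cases hx : x = 0 <;> by_cases hy : y = 0 <;> simp_all

lemma sg_cases (x : ZMod 2) : sg x = 1 ∨ sg x = -1 := by
  unfold sg; split_ifs <;> simp

lemma abs_sg (x : ZMod 2) : |sg x| = 1 := by
  rcases sg_cases x with h | h <;> simp [h]

lemma exp_val (x : ZMod 2) :
    Complex.exp ((Real.pi : ℂ) * Complex.I * ((x.val : ℕ) : ℂ)) = ((sg x : ℝ) : ℂ) := by
  have h : ∀ x : ZMod 2, (x = 0 ∧ x.val = 0) ∨ (x = 1 ∧ x.val = 1) := by decide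
  rcases h x with ⟨h1, h2⟩ | ⟨h1, h2⟩
  · rw [h2, h1]; simp [sg]
  · rw [h2, h1]; simp [sg, Complex.exp_pi_mul_I]

variable {Ω : Type*} [mΩ : MeasurableSpace Ω]

/-- The sum of the signs of the first `n` steps. -/
def T (X : ℕ → Ω → ZMod 2) (n : ℕ) (ω : Ω) : ℝ := ∑ k ∈ Finset.range n, sg (X (k + 1) ω)

/-- The exponential of the sum of the signs. -/
noncomputable def E (X : ℕ → Ω → ZMod 2) (n : ℕ) (θ : ℝ) (ω : Ω) : ℂ :=
  Complex.exp (((θ * T X n ω : ℝ) : ℂ) * Complex.I)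

lemma norm_E (X : ℕ → Ω → ZMod 2) (n : ℕ) (θ : ℝ) (ω : Ω) : ‖E X n θ ω‖ = 1 :=
  Complex.norm_exp_ofReal_mul_I _

lemma exp_sg (θ : ℝ) (x : ZMod 2) :
    Complex.exp (((θ * sg x : ℝ) : ℂ) * Complex.I)
      = ((Real.cos θ : ℝ) : ℂ) + ((Real.sin θ : ℝ) : ℂ) * Complex.I * ((sg x : ℝ) : ℂ) := by
  rw [Complex.exp_mul_I]
  rcases sg_cases x with h | h <;> simp [h]

lemma E_succ (X : ℕ → Ω → ZMod 2) (n : ℕ) (θ : ℝ) (ω : Ω) :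
    E X (n + 1) θ ω = E X n θ ω *
      (((Real.cos θ : ℝ) : ℂ) + ((Real.sin θ : ℝ) : ℂ) * Complex.I
        * ((sg (X (n + 1) ω) : ℝ) : ℂ)) := by
  rw [← exp_sg, E, E, ← Complex.exp_add, T, Finset.sum_range_succ, ← T]
  congr 1
  push_cast
  ring

lemma abs_T (X : ℕ → Ω → ZMod 2) (n : ℕ) (ω : Ω) : |T X n ω| ≤ n := by
  unfold T
  refine (Finset.abs_sum_le_sum_abs _ _).trans ?_
  simp [abs_sg]

lemma E_half (X : ℕ → Ω → ZMod 2) (n : ℕ) (ω : Ω) :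
    ((sg (pos X n ω) : ℝ) : ℂ) = Complex.I ^ n * E X n (-(Real.pi / 2)) ω := by
  induction n with
  | zero => simp [pos, sg, E, T]
  | succ n ih =>
    have h : pos X (n + 1) ω = pos X n ω + X (n + 1) ω := by
      simp [pos, Finset.sum_range_succ]
    rw [h, sg_add, E_succ, Complex.ofReal_mul, ih]
    simp only [Real.cos_neg, Real.cos_pi_div_two, Real.sin_neg, Real.sin_pi_div_two]
    push_cast
    linear_combination (-(Complex.I ^ n * E X n (-(Real.pi / 2)) ω * (sg (X (n + 1) ω) : ℂ)))
      * (-1 - Complex.I_sq)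

variable [mZ : MeasurableSpace (ZMod 2)] [MeasurableSingletonClass (ZMod 2)]

lemma meas_sg : Measurable sg := measurable_of_countable _

/-- The σ-algebra generated by the members of the family with index in `S`. -/
def sig (ξ : ℕ → Ω → Bool) (u : ℕ → Ω → ℕ) (g : ℕ → Ω → ZMod 2) (S : Set (ℕ ⊕ ℕ ⊕ ℕ)) :
    MeasurableSpace Ω :=
  ⨆ i ∈ S, MeasurableSpace.comap (fam ξ u g i) inferInstance

lemma fam_meas (ξ : ℕ → Ω → Bool) (u : ℕ → Ω → ℕ) (g : ℕ → Ω → ZMod 2)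
    {S : Set (ℕ ⊕ ℕ ⊕ ℕ)} {i} (hi : i ∈ S) : Measurable[sig ξ u g S] (fam ξ u g i) := by
  have h : MeasurableSpace.comap (fam ξ u g i) inferInstance ≤ sig ξ u g S :=
    le_iSup₂_of_le (f := fun i (_ : i ∈ S) => MeasurableSpace.comap (fam ξ u g i) inferInstance)
      i hi le_rfl
  exact (comap_measurable (fam ξ u g i)).mono h le_rfl

lemma ξ_meas (ξ : ℕ → Ω → Bool) (u : ℕ → Ω → ℕ) (g : ℕ → Ω → ZMod 2)
    {S : Set (ℕ ⊕ ℕ ⊕ ℕ)} {n} (hi : Sum.inl n ∈ S) : Measurable[sig ξ u g S] (ξ n) := by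
  have h : Measurable (Sum.elim id (fun _ => false) : Bool ⊕ ℕ ⊕ ZMod 2 → Bool) :=
    measurable_id.sumElim measurable_const
  exact h.comp (fam_meas ξ u g hi)

lemma u_meas (ξ : ℕ → Ω → Bool) (u : ℕ → Ω → ℕ) (g : ℕ → Ω → ZMod 2)
    {S : Set (ℕ ⊕ ℕ ⊕ ℕ)} {n} (hi : Sum.inr (Sum.inl n) ∈ S) :
    Measurable[sig ξ u g S] (u n) := by
  have h : Measurable (Sum.elim (fun _ => 0) (Sum.elim id (fun _ => 0)) :
      Bool ⊕ ℕ ⊕ ZMod 2 → ℕ) :=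
    measurable_const.sumElim (measurable_id.sumElim measurable_const)
  exact h.comp (fam_meas ξ u g hi)

lemma g_meas (ξ : ℕ → Ω → Bool) (u : ℕ → Ω → ℕ) (g : ℕ → Ω → ZMod 2)
    {S : Set (ℕ ⊕ ℕ ⊕ ℕ)} {n} (hi : Sum.inr (Sum.inr n) ∈ S) :
    Measurable[sig ξ u g S] (g n) := by
  have h : Measurable (Sum.elim (fun _ => 0) (Sum.elim (fun _ => 0) id) :
      Bool ⊕ ℕ ⊕ ZMod 2 → ZMod 2) :=
    measurable_const.sumElim (measurable_const.sumElim measurable_id)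
  exact h.comp (fam_meas ξ u g hi)

/-- All indices with time at most `n`. -/
def past (n : ℕ) : Set (ℕ ⊕ ℕ ⊕ ℕ) :=
  {i | Sum.elim id (Sum.elim id id) i ≤ n}

section walk

variable {P : Measure Ω} [IsProbabilityMeasure P] {μ : Measure (ZMod 2)} {α : ℝ}
  {ξ : ℕ → Ω → Bool} {u : ℕ → Ω → ℕ} {g X : ℕ → Ω → ZMod 2}

lemma sig_le (hd : IsDriving P α μ ξ u g) (S : Set (ℕ ⊕ ℕ ⊕ ℕ)) : sig ξ u g S ≤ mΩ := by
  refine iSup₂_le fun i _ => ?_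
  rw [← measurable_iff_comap_le]
  rcases i with n | n | n
  · exact measurable_inl.comp (hd.meas_ξ n)
  · exact measurable_inr.comp (measurable_inl.comp (hd.meas_u n))
  · exact measurable_inr.comp (measurable_inr.comp (hd.meas_g n))

lemma int_mul (hd : IsDriving P α μ ξ u g) {S S' : Set (ℕ ⊕ ℕ ⊕ ℕ)} (hS : Disjoint S S')
    {f h : Ω → ℂ} (hf : Measurable[sig ξ u g S] f) (hh : Measurable[sig ξ u g S'] h) :
    ∫ ω, f ω * h ω ∂P = (∫ ω, f ω ∂P) * ∫ ω, h ω ∂P := by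
  have hi : Indep (sig ξ u g S) (sig ξ u g S') P :=
    indep_iSup_of_disjoint (fun i => by
      have := sig_le hd {i}
      simpa [sig] using this) hd.indep.iIndep hS
  have hfh : IndepFun f h P := by
    rw [IndepFun_iff_Indep]
    exact indep_of_indep_of_le_left (indep_of_indep_of_le_right hi
      (measurable_iff_comap_le.1 hh)) (measurable_iff_comap_le.1 hf)
  exact hfh.integral_fun_mul_eq_mul_integral
    (hf.mono (sig_le hd S) le_rfl).aestronglyMeasurable
    (hh.mono (sig_le hd S') le_rfl).aestronglyMeasurable

lemma sg_rec (hd : IsDriving P α μ ξ u g)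
    (hX : ∀ n, 2 ≤ n → ∀ ω, X n ω = if ξ n ω then X (u n ω) ω else g n ω) (n : ℕ) (hn : 1 ≤ n)
    (ω : Ω) :
    sg (X (n + 1) ω) = (∑ j ∈ Finset.range n, sg (X (j + 1) ω) *
        ((if ξ (n + 1) ω = true then 1 else 0) * (if u (n + 1) ω = j + 1 then 1 else 0)))
      + (if ξ (n + 1) ω = false then 1 else 0) * sg (g (n + 1) ω) := by
  rw [hX (n + 1) (by omega)]
  obtain ⟨h1, h2⟩ := hd.u_range (n + 1) (by omega) ω
  cases h : ξ (n + 1) ω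
  · simp
  · simp only [if_true, one_mul, reduceCtorEq, if_false, zero_mul, add_zero, mul_ite, mul_one,
      mul_zero]
    rw [Finset.sum_eq_single (u (n + 1) ω - 1)]
    · rw [if_pos (by omega), Nat.sub_add_cancel h1]
    · intro b _ hb
      rw [if_neg (by omega)]
    · intro hb
      simp only [Finset.mem_range] at hb
      omega

lemma meas_X (hd : IsDriving P α μ ξ u g) (hX1 : ∀ ω, X 1 ω = g 1 ω)
    (hX : ∀ n, 2 ≤ n → ∀ ω, X n ω = if ξ n ω then X (u n ω) ω else g n ω) (N : ℕ) (k : ℕ)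
    (hk : k + 1 ≤ N) : Measurable[sig ξ u g (past N)] (fun ω => sg (X (k + 1) ω)) := by
  induction k using Nat.strong_induction_on with
  | _ k ih =>
  rcases Nat.eq_zero_or_pos k with rfl | hk0
  · simp only [zero_add, hX1]
    exact meas_sg.comp (g_meas ξ u g (by simpa [past] using hk))
  · simp only [sg_rec hd hX k hk0]
    have hξ : Measurable[sig ξ u g (past N)] (ξ (k + 1)) :=
      ξ_meas ξ u g (by simpa [past] using hk)
    have hu : Measurable[sig ξ u g (past N)] (u (k + 1)) :=
      u_meas ξ u g (by simpa [past] using hk)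
    have hg : Measurable[sig ξ u g (past N)] (g (k + 1)) :=
      g_meas ξ u g (by simpa [past] using hk)
    letI : MeasurableSpace Ω := sig ξ u g (past N)
    refine Measurable.add (Finset.measurable_fun_sum _ fun j hj => ?_) ?_
    · refine (ih j (Finset.mem_range.1 hj) (by have := Finset.mem_range.1 hj; omega)).mul ?_
      exact ((measurable_of_countable (fun b : Bool => if b = true then (1 : ℝ) else 0)).comp
        hξ).mul ((measurable_of_countable
          (fun b : ℕ => if b = j + 1 then (1 : ℝ) else 0)).comp hu)
    · exact ((measurable_of_countable (fun b : Bool => if b = false then (1 : ℝ) else 0)).comp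
        hξ).mul (meas_sg.comp hg)

lemma meas_T (hd : IsDriving P α μ ξ u g) (hX1 : ∀ ω, X 1 ω = g 1 ω)
    (hX : ∀ n, 2 ≤ n → ∀ ω, X n ω = if ξ n ω then X (u n ω) ω else g n ω) (n : ℕ) :
    Measurable[sig ξ u g (past n)] (T X n) := by
  unfold T
  exact Finset.measurable_fun_sum _ fun j hj =>
    meas_X hd hX1 hX n j (Finset.mem_range.1 hj)

lemma meas_E (hd : IsDriving P α μ ξ u g) (hX1 : ∀ ω, X 1 ω = g 1 ω)
    (hX : ∀ n, 2 ≤ n → ∀ ω, X n ω = if ξ n ω then X (u n ω) ω else g n ω) (n : ℕ) (θ : ℝ) :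
    Measurable[sig ξ u g (past n)] (E X n θ) := by
  have h : Measurable (fun t : ℝ => Complex.exp (((θ * t : ℝ) : ℂ) * Complex.I)) := by
    fun_prop
  exact h.comp (meas_T hd hX1 hX n)

lemma int_ite {p : Ω → Prop} [DecidablePred p] (hp : MeasurableSet {ω | p ω}) :
    ∫ ω, (if p ω then (1 : ℂ) else 0) ∂P = ((P {ω | p ω}).toReal : ℂ) := by
  have h : (fun ω => if p ω then (1 : ℂ) else 0) = Set.indicator {ω | p ω} (fun _ => 1) := by
    ext ω; simp [Set.indicator]
  rw [h, integral_indicator hp]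
  simp [Measure.real]

lemma int_sg_g (hd : IsDriving P α μ ξ u g)
    (hμ0 : μ {(0 : ZMod 2)} = 1 / 2) (hμ1 : μ {(1 : ZMod 2)} = 1 / 2) (n : ℕ) (hn : 1 ≤ n) :
    ∫ ω, ((sg (g n ω) : ℝ) : ℂ) ∂P = 0 := by
  have hm : Measurable (fun x : ZMod 2 => ((sg x : ℝ) : ℂ)) := measurable_of_countable _
  have h := integral_map (μ := P) (hd.meas_g n).aemeasurable
    (f := fun x : ZMod 2 => ((sg x : ℝ) : ℂ)) hm.aestronglyMeasurable
  rw [← h, hd.g_law n hn]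
  haveI : IsProbabilityMeasure μ := by
    rw [← hd.g_law n hn]
    exact Measure.isProbabilityMeasure_map (hd.meas_g n).aemeasurable
  have hF : ∀ f : ZMod 2 → ℂ, ∑ x, f x = f 0 + f 1 := fun f => Fin.sum_univ_two f
  rw [integral_fintype (Integrable.of_finite), hF]
  simp [Measure.real, hμ0, hμ1, sg]

lemma E_int (hd : IsDriving P α μ ξ u g) (hX1 : ∀ ω, X 1 ω = g 1 ω)
    (hX : ∀ n, 2 ≤ n → ∀ ω, X n ω = if ξ n ω then X (u n ω) ω else g n ω) (n : ℕ) (θ : ℝ) :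
    Integrable (E X n θ) P :=
  Integrable.of_bound ((meas_E hd hX1 hX n θ).mono (sig_le hd _) le_rfl).aestronglyMeasurable 1
    (ae_of_all _ fun ω => (norm_E X n θ ω).le)

/-- The conditional-expectation step. -/
lemma step (hd : IsDriving P α μ ξ u g) (hX1 : ∀ ω, X 1 ω = g 1 ω)
    (hX : ∀ n, 2 ≤ n → ∀ ω, X n ω = if ξ n ω then X (u n ω) ω else g n ω)
    (hμ0 : μ {(0 : ZMod 2)} = 1 / 2) (hμ1 : μ {(1 : ZMod 2)} = 1 / 2) (hα0 : 0 ≤ α)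
    (n : ℕ) (hn : 1 ≤ n) (θ : ℝ) :
    ∫ ω, E X n θ ω * ((sg (X (n + 1) ω) : ℝ) : ℂ) ∂P
      = (α / n : ℂ) * ∫ ω, E X n θ ω * ((T X n ω : ℝ) : ℂ) ∂P := by
  have hEm := meas_E hd hX1 hX n θ
  have hEs : ∀ j < n, Measurable[sig ξ u g (past n)]
      (fun ω => E X n θ ω * ((sg (X (j + 1) ω) : ℝ) : ℂ)) := fun j hj =>
    hEm.mul (Complex.measurable_ofReal.comp (meas_X hd hX1 hX n j hj))
  have hbase : ∀ {f : Ω → ℂ}, Measurable f → (∀ ω, ‖f ω‖ ≤ 1) → Integrable f P :=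
    fun hf hb => Integrable.of_bound hf.aestronglyMeasurable 1 (ae_of_all _ hb)
  have hEsI : ∀ j < n, Integrable (fun ω => E X n θ ω * ((sg (X (j + 1) ω) : ℝ) : ℂ)) P :=
    fun j hj => hbase ((hEs j hj).mono (sig_le hd _) le_rfl) fun ω => by
      simp [norm_E, abs_sg]
  -- measurability of the fresh indicators
  have mξ : ∀ (b : Bool) (S : Set (ℕ ⊕ ℕ ⊕ ℕ)), Sum.inl (n + 1) ∈ S →
      Measurable[sig ξ u g S] (fun ω => if ξ (n + 1) ω = b then (1 : ℂ) else 0) := fun b S h =>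
    (measurable_of_countable (fun c : Bool => if c = b then (1 : ℂ) else 0)).comp
      (ξ_meas ξ u g h)
  have mu : ∀ (j : ℕ) (S : Set (ℕ ⊕ ℕ ⊕ ℕ)), Sum.inr (Sum.inl (n + 1)) ∈ S →
      Measurable[sig ξ u g S] (fun ω => if u (n + 1) ω = j then (1 : ℂ) else 0) := fun b S h =>
    (measurable_of_countable (fun c : ℕ => if c = b then (1 : ℂ) else 0)).comp
      (u_meas ξ u g h)
  have mg : ∀ (S : Set (ℕ ⊕ ℕ ⊕ ℕ)), Sum.inr (Sum.inr (n + 1)) ∈ S →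
      Measurable[sig ξ u g S] (fun ω => ((sg (g (n + 1) ω) : ℝ) : ℂ)) := fun S h =>
    (measurable_of_countable (fun c : ZMod 2 => ((sg c : ℝ) : ℂ))).comp (g_meas ξ u g h)
  have hdisj : Disjoint (past n) (past n)ᶜ := disjoint_compl_right
  have hprod : ∀ j < n, ∫ ω, (if ξ (n + 1) ω = true then (1 : ℂ) else 0)
      * (if u (n + 1) ω = j + 1 then (1 : ℂ) else 0) ∂P = (α / n : ℂ) := by
    intro j hj
    rw [int_mul hd (S := {Sum.inl (n + 1)}) (S' := {Sum.inr (Sum.inl (n + 1))}) (by simp)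
      (mξ _ _ rfl) (mu _ _ rfl)]
    rw [int_ite (p := fun ω => ξ (n + 1) ω = true) (hd.meas_ξ (n + 1) (measurableSet_singleton true)),
      int_ite (p := fun ω => u (n + 1) ω = j + 1)
        (hd.meas_u (n + 1) (measurableSet_singleton (j + 1))),
      hd.ξ_law _ (by omega), hd.u_law (n + 1) (by omega) (j + 1) (by omega) (by omega)]
    simp [ENNReal.toReal_ofReal hα0, div_eq_mul_inv]
  have hfresh : ∫ ω, (if ξ (n + 1) ω = false then (1 : ℂ) else 0)
      * ((sg (g (n + 1) ω) : ℝ) : ℂ) ∂P = 0 := by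
    rw [int_mul hd (S := {Sum.inl (n + 1)}) (S' := {Sum.inr (Sum.inr (n + 1))}) (by simp)
      (mξ _ _ rfl) (mg _ rfl), int_sg_g hd hμ0 hμ1 _ (by omega), mul_zero]
  have mA : ∀ j, Measurable[sig ξ u g (past n)ᶜ]
      (fun ω => (if ξ (n + 1) ω = true then (1 : ℂ) else 0)
      * (if u (n + 1) ω = j + 1 then (1 : ℂ) else 0)) := fun j =>
    (mξ _ _ (by simp [past])).mul (mu _ _ (by simp [past]))
  have mB : Measurable[sig ξ u g (past n)ᶜ]
      (fun ω => (if ξ (n + 1) ω = false then (1 : ℂ) else 0)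
      * ((sg (g (n + 1) ω) : ℝ) : ℂ)) :=
    (mξ _ _ (by simp [past])).mul (mg _ (by simp [past]))
  have hexp : ∀ ω, E X n θ ω * ((sg (X (n + 1) ω) : ℝ) : ℂ)
      = (∑ j ∈ Finset.range n, (E X n θ ω * ((sg (X (j + 1) ω) : ℝ) : ℂ)) *
          ((if ξ (n + 1) ω = true then (1 : ℂ) else 0)
            * (if u (n + 1) ω = j + 1 then (1 : ℂ) else 0)))
        + E X n θ ω * ((if ξ (n + 1) ω = false then (1 : ℂ) else 0)
            * ((sg (g (n + 1) ω) : ℝ) : ℂ)) := by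
    intro ω
    rw [sg_rec hd hX n hn]
    push_cast
    rw [mul_add, Finset.mul_sum]
    simp only [mul_assoc, Complex.ofReal_one, Complex.ofReal_zero,
      apply_ite (fun x : ℝ => (x : ℂ))]
  simp only [hexp]
  rw [integral_add, integral_finsetSum, int_mul hd hdisj hEm mB, hfresh, mul_zero, add_zero]
  · rw [Finset.sum_congr rfl (fun j hj => by
      rw [int_mul hd hdisj (hEs j (Finset.mem_range.1 hj)) (mA j),
        hprod j (Finset.mem_range.1 hj)]), ← Finset.sum_mul, mul_comm]
    congr 1
    rw [← integral_finsetSum _ (fun j hj => hEsI j (Finset.mem_range.1 hj))]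
    simp only [T, Complex.ofReal_sum, Finset.mul_sum]
  · intro j hj
    refine hbase (((hEs j (Finset.mem_range.1 hj)).mono (sig_le hd _) le_rfl).mul
      ((mA j).mono (sig_le hd _) le_rfl)) fun ω => ?_
    simp only [norm_mul, norm_E, Complex.norm_real, Real.norm_eq_abs, abs_sg]
    split_ifs <;> simp
  · refine integrable_finsetSum _ fun j hj => ?_
    refine hbase (((hEs j (Finset.mem_range.1 hj)).mono (sig_le hd _) le_rfl).mul
      ((mA j).mono (sig_le hd _) le_rfl)) fun ω => ?_
    simp only [norm_mul, norm_E, Complex.norm_real, Real.norm_eq_abs, abs_sg]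
    split_ifs <;> simp
  · refine hbase ((hEm.mono (sig_le hd _) le_rfl).mul
      (mB.mono (sig_le hd _) le_rfl)) fun ω => ?_
    simp only [norm_mul, norm_E, Complex.norm_real, Real.norm_eq_abs, abs_sg]
    split_ifs <;> simp

lemma deriv_int (hd : IsDriving P α μ ξ u g) (hX1 : ∀ ω, X 1 ω = g 1 ω)
    (hX : ∀ n, 2 ≤ n → ∀ ω, X n ω = if ξ n ω then X (u n ω) ω else g n ω) (n : ℕ) (θ : ℝ) :
    HasDerivAt (fun θ => ∫ ω, E X n θ ω ∂P)
      (∫ ω, E X n θ ω * ((T X n ω : ℝ) : ℂ) * Complex.I ∂P) θ := by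
  have hTm := (meas_T hd hX1 hX n).mono (sig_le hd _) le_rfl
  have hEm : ∀ θ, Measurable (E X n θ) := fun θ =>
    (meas_E hd hX1 hX n θ).mono (sig_le hd _) le_rfl
  refine (hasDerivAt_integral_of_dominated_loc_of_deriv_le (s := Set.univ)
    (F' := fun θ ω => E X n θ ω * ((T X n ω : ℝ) : ℂ) * Complex.I) (bound := fun _ => (n : ℝ))
    univ_mem (Eventually.of_forall fun θ => (hEm θ).aestronglyMeasurable)
    (E_int hd hX1 hX n θ) ?_ ?_ (integrable_const _) ?_).2
  · exact (((hEm θ).mul (Complex.measurable_ofReal.comp hTm)).mul_const _).aestronglyMeasurable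
  · refine ae_of_all _ fun ω t _ => ?_
    simpa [norm_E] using abs_T X n ω
  · refine ae_of_all _ fun ω t _ => ?_
    have h1 : HasDerivAt (fun t : ℝ => ((t * T X n ω : ℝ) : ℂ) * Complex.I)
        (((1 * T X n ω : ℝ) : ℂ) * Complex.I) t :=
      (((hasDerivAt_id t).mul_const (T X n ω)).ofReal_comp).mul_const Complex.I
    have h2 := h1.cexp
    rw [one_mul, ← mul_assoc] at h2
    exact h2

lemma main (hd : IsDriving P α μ ξ u g) (hX1 : ∀ ω, X 1 ω = g 1 ω)
    (hX : ∀ n, 2 ≤ n → ∀ ω, X n ω = if ξ n ω then X (u n ω) ω else g n ω)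
    (hμ0 : μ {(0 : ZMod 2)} = 1 / 2) (hμ1 : μ {(1 : ZMod 2)} = 1 / 2) (hα0 : 0 ≤ α)
    (n : ℕ) (hn : 1 ≤ n) (θ : ℝ) :
    ∫ ω, E X n θ ω ∂P = (((elephantPoly α n).eval (Real.cos θ) : ℝ) : ℂ) := by
  have hsucc : ∀ m θ, ∫ ω, E X (m + 1) θ ω ∂P
      = ((Real.cos θ : ℝ) : ℂ) * ∫ ω, E X m θ ω ∂P + ((Real.sin θ : ℝ) : ℂ) * Complex.I *
        ∫ ω, E X m θ ω * ((sg (X (m + 1) ω) : ℝ) : ℂ) ∂P := by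
    intro m θ
    rw [← integral_const_mul, ← integral_const_mul, ← integral_add]
    · congr 1; ext ω; rw [E_succ]; ring
    · exact (E_int hd hX1 hX m θ).const_mul _
    · refine Integrable.const_mul ?_ _
      refine Integrable.of_bound (((meas_E hd hX1 hX m θ).mono (sig_le hd _) le_rfl).mul
        (Complex.measurable_ofReal.comp ((meas_X hd hX1 hX (m + 1) m le_rfl).mono
          (sig_le hd _) le_rfl))).aestronglyMeasurable 1 (ae_of_all _ fun ω => ?_)
      simp [norm_E, abs_sg]
  induction n, hn using Nat.le_induction generalizing θ with
  | base =>
    have h0 : ∀ ω, E X 0 θ ω = 1 := fun ω => by simp [E, T]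
    have h := hsucc 0 θ
    simp only [h0, zero_add, one_mul, hX1, int_sg_g hd hμ0 hμ1 1 le_rfl] at h
    rw [h]
    simp [elephantPoly]
  | succ n hn ih =>
    have hD := deriv_int hd hX1 hX n θ
    have hfun : (fun θ => ∫ ω, E X n θ ω ∂P)
        = fun θ => (((elephantPoly α n).eval (Real.cos θ) : ℝ) : ℂ) := funext ih
    rw [hfun] at hD
    have hD2 : HasDerivAt (fun θ => (((elephantPoly α n).eval (Real.cos θ) : ℝ) : ℂ)) _ θ :=
      (((elephantPoly α n).hasDerivAt (Real.cos θ)).comp θ (Real.hasDerivAt_cos θ)).ofReal_comp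
    have hE := hD.unique hD2
    rw [integral_mul_const] at hE
    rw [hsucc, ih, step hd hX1 hX hμ0 hμ1 hα0 n hn θ]
    obtain ⟨m, rfl⟩ : ∃ m, n = m + 1 := ⟨n - 1, by omega⟩
    have hs : (1 : ℝ) - Real.cos θ ^ 2 = Real.sin θ ^ 2 := by
      rw [← Real.sin_sq_add_cos_sq θ]; ring
    rw [elephantPoly]
    simp only [eval_sub, eval_mul, eval_X, eval_C, eval_one, eval_pow, hs]
    push_cast at hE ⊢
    linear_combination (Complex.sin θ * (α / (m + 1))) * hE

end walk

end SRRWAux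


/-- **The SRRW on `ℤ₂` and the elephant polynomials.**  Let `S` be the usual SRRW on
`(ℤ₂, +)` with reinforcement parameter `α ∈ [0,1)` and uniform step distribution, and
let `(R_n)` be the elephant polynomials with the same parameter.  Then for every `n ≥ 1`,
`E[exp(iπ S_n)] = 2 ℙ(S_n = 0) - 1 = iⁿ R_n(0)`. -/
theorem srrw_zmod_two_elephant_poly
    [MeasurableSpace (ZMod 2)] [MeasurableSingletonClass (ZMod 2)]
    {Ω : Type*} [MeasurableSpace Ω] (P : Measure Ω) [IsProbabilityMeasure P]
    (μ : Measure (ZMod 2)) [IsProbabilityMeasure μ]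
    (hμ0 : μ {(0 : ZMod 2)} = 1 / 2) (hμ1 : μ {(1 : ZMod 2)} = 1 / 2)
    (α : ℝ) (hα0 : 0 ≤ α) (hα1 : α < 1)
    (X : ℕ → Ω → ZMod 2) (hX : IsSRRWAdd P α μ X) (n : ℕ) (hn : 1 ≤ n) :
    (∫ ω, Complex.exp ((Real.pi : ℂ) * Complex.I * ((pos X n ω).val : ℂ)) ∂P)
        = ((2 * (P {ω | pos X n ω = 0}).toReal - 1 : ℝ) : ℂ) ∧
    (∫ ω, Complex.exp ((Real.pi : ℂ) * Complex.I * ((pos X n ω).val : ℂ)) ∂P)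
        = Complex.I ^ n * (((elephantPoly α n).eval 0 : ℝ) : ℂ) := by
  obtain ⟨ξ, u, g, hd, -, -, hX1, hXr⟩ := hX
  simp only [id] at hXr
  have hm := SRRWAux.main hd hX1 hXr hμ0 hμ1 hα0 n hn (-(Real.pi / 2))
  have hEm := (SRRWAux.meas_E hd hX1 hXr n (-(Real.pi / 2))).mono
    (SRRWAux.sig_le hd _) le_rfl
  simp only [SRRWAux.exp_val]
  constructor
  · have hsm : Measurable (fun ω => ((SRRWAux.sg (pos X n ω) : ℝ) : ℂ)) := by
      simp only [SRRWAux.E_half]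
      exact hEm.const_mul _
    have hset : MeasurableSet {ω | pos X n ω = 0} := by
      have h : {ω | pos X n ω = 0}
          = (fun ω => ((SRRWAux.sg (pos X n ω) : ℝ) : ℂ)) ⁻¹' {1} := by
        ext ω
        simp only [Set.mem_setOf_eq, Set.mem_preimage, Set.mem_singleton_iff, SRRWAux.sg]
        split_ifs with h <;> simp [h]
        norm_num
      rw [h]
      exact hsm (measurableSet_singleton 1)
    have h2 : ∀ ω, ((SRRWAux.sg (pos X n ω) : ℝ) : ℂ)
        = 2 * (if pos X n ω = 0 then (1 : ℂ) else 0) - 1 := by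
      intro ω
      unfold SRRWAux.sg
      split_ifs <;> norm_num
    simp only [h2]
    rw [integral_sub, integral_const_mul, SRRWAux.int_ite hset]
    · simp
    · refine Integrable.const_mul ?_ _
      refine Integrable.of_bound (Measurable.ite hset measurable_const
        measurable_const).aestronglyMeasurable 1 (ae_of_all _ fun ω => ?_)
      split_ifs <;> simp
    · exact integrable_const _
  · simp only [SRRWAux.E_half]
    rw [integral_const_mul, hm, Real.cos_neg, Real.cos_pi_div_two]
end

section
/- Let L ≥ 3, let S be the usual step-reinforced random walk on (ℤ_L, +) with reinforcement parameter α ∈ [0,1) and step distribution μ(−1) = μ(1) = 1/2, and let (R_n)_{n≥1} be the elephant polynomials with the same parameter α. Then for every k ∈ {1,…,L−1} and every n ≥ 1, E[exp(i·2πk·S_n/L)] = R_n(cos(2kπ/L)). -/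
open MeasureTheory ProbabilityTheory Filter Polynomial
open scoped ENNReal NNReal Topology

namespace SRRW

section helpers

/-- The sigma-algebra generated by the part of the driving family indexed by `S`. -/
@[reducible] def Fil {Ω V : Type*} [AddCommGroup V] [MeasurableSpace Ω] [MeasurableSpace V]
    (ξ : ℕ → Ω → Bool) (u : ℕ → Ω → ℕ) (g : ℕ → Ω → V) (S : Set (ℕ ⊕ ℕ ⊕ ℕ)) :
    MeasurableSpace Ω :=
  ⨆ i ∈ S, MeasurableSpace.comap (fam ξ u g i) inferInstance

/-- The time index of an element of the driving family. -/
def level : (ℕ ⊕ ℕ ⊕ ℕ) → ℕ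
  | .inl n => n
  | .inr (.inl n) => n
  | .inr (.inr n) => n

variable {Ω : Type*} [mΩ : MeasurableSpace Ω] {V : Type*} [AddCommGroup V] [MeasurableSpace V]
  {P : Measure Ω} {α : ℝ} {μ : Measure V}
  {ξ : ℕ → Ω → Bool} {u : ℕ → Ω → ℕ} {g : ℕ → Ω → V}

lemma fam_meas (h : IsDriving P α μ ξ u g) (i : ℕ ⊕ ℕ ⊕ ℕ) : Measurable (fam ξ u g i) := by
  rcases i with n | n | n
  · exact measurable_inl.comp (h.meas_ξ n)
  · exact measurable_inr.comp (measurable_inl.comp (h.meas_u n))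
  · exact measurable_inr.comp (measurable_inr.comp (h.meas_g n))

lemma Fil_le (h : IsDriving P α μ ξ u g) (S : Set (ℕ ⊕ ℕ ⊕ ℕ)) : Fil ξ u g S ≤ mΩ :=
  iSup₂_le fun i _ => (fam_meas h i).comap_le

lemma fam_meas_Fil {S : Set (ℕ ⊕ ℕ ⊕ ℕ)} {i : ℕ ⊕ ℕ ⊕ ℕ} (hi : i ∈ S) :
    Measurable[Fil ξ u g S] (fam ξ u g i) := by
  apply Measurable.of_comap_le
  exact le_iSup₂_of_le (f := fun i (_ : i ∈ S) =>
    MeasurableSpace.comap (fam ξ u g i) inferInstance) i hi le_rfl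

lemma xi_meas_Fil {S : Set (ℕ ⊕ ℕ ⊕ ℕ)} {n : ℕ} (hi : .inl n ∈ S) :
    Measurable[Fil ξ u g S] (ξ n) := by
  have h1 : Measurable (Sum.elim id (fun _ => true) : Bool ⊕ ℕ ⊕ V → Bool) :=
    measurable_id.sumElim measurable_const
  exact h1.comp (fam_meas_Fil (ξ := ξ) (u := u) (g := g) hi)

lemma u_meas_Fil {S : Set (ℕ ⊕ ℕ ⊕ ℕ)} {n : ℕ} (hi : .inr (.inl n) ∈ S) :
    Measurable[Fil ξ u g S] (u n) := by
  have h1 : Measurable (Sum.elim (fun _ => 0) (Sum.elim id (fun _ => 0)) :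
      Bool ⊕ ℕ ⊕ V → ℕ) :=
    measurable_const.sumElim (measurable_id.sumElim measurable_const)
  exact h1.comp (fam_meas_Fil (ξ := ξ) (u := u) (g := g) hi)

lemma g_meas_Fil {S : Set (ℕ ⊕ ℕ ⊕ ℕ)} {n : ℕ} (hi : .inr (.inr n) ∈ S) :
    Measurable[Fil ξ u g S] (g n) := by
  have h1 : Measurable (Sum.elim (fun _ => 0) (Sum.elim (fun _ => 0) id) :
      Bool ⊕ ℕ ⊕ V → V) :=
    measurable_const.sumElim (measurable_const.sumElim measurable_id)
  exact h1.comp (fam_meas_Fil (ξ := ξ) (u := u) (g := g) hi)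

lemma integral_mul_disj (h : IsDriving P α μ ξ u g) {S T : Set (ℕ ⊕ ℕ ⊕ ℕ)}
    (hST : Disjoint S T) {f k : Ω → ℂ} (hf : Measurable[Fil ξ u g S] f)
    (hk : Measurable[Fil ξ u g T] k) :
    ∫ ω, f ω * k ω ∂P = (∫ ω, f ω ∂P) * ∫ ω, k ω ∂P := by
  have hi : Indep (Fil ξ u g S) (Fil ξ u g T) P :=
    indep_iSup_of_disjoint (fun i => (fam_meas h i).comap_le) h.indep.iIndep hST
  have hfk : IndepFun f k P := by
    rw [IndepFun_iff_Indep]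
    exact indep_of_indep_of_le hi hf.comap_le hk.comap_le
  exact hfk.integral_fun_mul_eq_mul_integral
    (hf.mono (Fil_le h S) le_rfl).aestronglyMeasurable
    (hk.mono (Fil_le h T) le_rfl).aestronglyMeasurable

/-- Partial sums. -/
def T (Y : ℕ → Ω → ℤ) (n : ℕ) (ω : Ω) : ℤ := ∑ k ∈ Finset.range n, Y (k + 1) ω

variable {e : V → ℤ} {Y : ℕ → Ω → ℤ}

lemma Y_eq (h : IsDriving P α μ ξ u g)
    (hYn : ∀ n, 2 ≤ n → ∀ ω, Y n ω = if ξ n ω then Y (u n ω) ω else e (g n ω))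
    {n : ℕ} (hn : 2 ≤ n) (ω : Ω) :
    Y n ω = if ξ n ω then ∑ j ∈ Finset.Ico 1 n, (if u n ω = j then Y j ω else 0)
      else e (g n ω) := by
  have hm : u n ω ∈ Finset.Ico 1 n := Finset.mem_Ico.2 (h.u_range n hn ω)
  have hs : ∑ j ∈ Finset.Ico 1 n, (if u n ω = j then Y j ω else 0) = Y (u n ω) ω := by
    simp only [Finset.sum_ite_eq, hm, if_true]
  rw [hYn n hn ω, hs]

lemma Y_meas (h : IsDriving P α μ ξ u g) (he : Measurable e)
    (hY1 : ∀ ω, Y 1 ω = e (g 1 ω))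
    (hYn : ∀ n, 2 ≤ n → ∀ ω, Y n ω = if ξ n ω then Y (u n ω) ω else e (g n ω))
    (N : ℕ) (n : ℕ) (hn1 : 1 ≤ n) (hnN : n ≤ N) :
    Measurable[Fil ξ u g {i | level i ≤ N}] (Y n) := by
  induction n using Nat.strong_induction_on with
  | _ n ih =>
    have hg : Measurable[Fil ξ u g {i | level i ≤ N}] (fun ω => e (g n ω)) :=
      he.comp (g_meas_Fil (by exact hnN))
    have hx : Measurable[Fil ξ u g {i | level i ≤ N}] (ξ n) := xi_meas_Fil (by exact hnN)
    have hu : Measurable[Fil ξ u g {i | level i ≤ N}] (u n) := u_meas_Fil (by exact hnN)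
    rcases hn1.eq_or_lt with rfl | hn2
    · rwa [show Y 1 = fun ω => e (g 1 ω) from funext hY1]
    · rw [show Y n = _ from funext (Y_eq h hYn hn2)]
      refine Measurable.ite (hx (measurableSet_singleton true)) ?_ hg
      refine Finset.measurable_fun_sum _ fun j hj => ?_
      rw [Finset.mem_Ico] at hj
      exact Measurable.ite (hu (measurableSet_singleton j))
        (ih j hj.2 hj.1 (by omega)) measurable_const

lemma T_meas (h : IsDriving P α μ ξ u g) (he : Measurable e)
    (hY1 : ∀ ω, Y 1 ω = e (g 1 ω))
    (hYn : ∀ n, 2 ≤ n → ∀ ω, Y n ω = if ξ n ω then Y (u n ω) ω else e (g n ω))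
    (N : ℕ) : Measurable[Fil ξ u g {i | level i ≤ N}] (T Y N) := by
  refine Finset.measurable_fun_sum _ fun j hj => ?_
  rw [Finset.mem_range] at hj
  exact Y_meas h he hY1 hYn N _ (by omega) (by omega)

lemma Y_pm (h : IsDriving P α μ ξ u g) (hpm : ∀ x, e x = 1 ∨ e x = -1)
    (hY1 : ∀ ω, Y 1 ω = e (g 1 ω))
    (hYn : ∀ n, 2 ≤ n → ∀ ω, Y n ω = if ξ n ω then Y (u n ω) ω else e (g n ω))
    (ω : Ω) (n : ℕ) (hn1 : 1 ≤ n) : Y n ω = 1 ∨ Y n ω = -1 := by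
  induction n using Nat.strong_induction_on with
  | _ n ih =>
    rcases hn1.eq_or_lt with rfl | hn2
    · rw [hY1]; exact hpm _
    · rw [hYn n hn2]
      split_ifs
      · exact ih _ (h.u_range n hn2 ω).2 (h.u_range n hn2 ω).1
      · exact hpm _

lemma T_bound (h : IsDriving P α μ ξ u g) (hpm : ∀ x, e x = 1 ∨ e x = -1)
    (hY1 : ∀ ω, Y 1 ω = e (g 1 ω))
    (hYn : ∀ n, 2 ≤ n → ∀ ω, Y n ω = if ξ n ω then Y (u n ω) ω else e (g n ω))
    (ω : Ω) (n : ℕ) : |T Y n ω| ≤ n := by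
  refine (Finset.abs_sum_le_sum_abs _ _).trans ?_
  refine (Finset.sum_le_card_nsmul _ _ 1 fun j _ => ?_).trans (by simp)
  rcases Y_pm h hpm hY1 hYn ω (j + 1) (by omega) with h | h <;> simp [h]

/-- The character `m ↦ exp(iθm)`. -/
noncomputable def ch (θ : ℝ) (m : ℤ) : ℂ := Complex.exp ((θ : ℂ) * (m : ℂ) * Complex.I)

lemma ch_add (θ : ℝ) (m k : ℤ) : ch θ (m + k) = ch θ m * ch θ k := by
  simp only [ch, ← Complex.exp_add]; push_cast; ring_nf

lemma ch_norm (θ : ℝ) (m : ℤ) : ‖ch θ m‖ = 1 := by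
  have := Complex.norm_exp_ofReal_mul_I (θ * m)
  simpa [ch] using this

lemma ch_pm (θ : ℝ) (m : ℤ) (hm : m = 1 ∨ m = -1) :
    ch θ m = Complex.cos θ + Complex.sin θ * Complex.I * m := by
  rcases hm with rfl | rfl
  · simp [ch, Complex.exp_mul_I]
  · have := Complex.exp_mul_I (-(θ : ℂ))
    rw [Complex.cos_neg, Complex.sin_neg] at this
    simp only [ch]
    push_cast
    rw [mul_neg_one, this]; ring

lemma ch_deriv (θ : ℝ) (m : ℤ) :
    HasDerivAt (fun t : ℝ => ch t m) (Complex.I * m * ch θ m) θ := by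
  have h1 : HasDerivAt (fun t : ℝ => (t : ℂ) * (m : ℂ) * Complex.I)
      (1 * (m : ℂ) * Complex.I) θ :=
    ((Complex.ofRealCLM.hasDerivAt (x := θ)).mul_const _).mul_const _
  have h2 : HasDerivAt (fun t : ℝ => ch t m) (ch θ m * (1 * (m : ℂ) * Complex.I)) θ := h1.cexp
  rwa [show ch θ m * (1 * (m : ℂ) * Complex.I) = Complex.I * m * ch θ m by ring] at h2

lemma phi_deriv [IsProbabilityMeasure P] {S : Ω → ℤ} (hS : Measurable S) (n : ℕ)
    (hb : ∀ ω, |S ω| ≤ n) (θ : ℝ) :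
    HasDerivAt (fun t : ℝ => ∫ ω, ch t (S ω) ∂P)
      (∫ ω, Complex.I * (S ω : ℂ) * ch θ (S ω) ∂P) θ := by
  have hm : ∀ F : ℤ → ℂ, AEStronglyMeasurable (fun ω => F (S ω)) P := fun F =>
    ((measurable_of_countable F).comp hS).aestronglyMeasurable
  refine (hasDerivAt_integral_of_dominated_loc_of_deriv_le (s := Set.univ)
    (F := fun t ω => ch t (S ω)) (F' := fun t ω => Complex.I * (S ω : ℂ) * ch t (S ω))
    (bound := fun _ => (n : ℝ)) Filter.univ_mem
    (Eventually.of_forall fun t => hm (ch t)) ?_ (hm fun m => Complex.I * m * ch θ m) ?_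
    (integrable_const _) ?_).2
  · exact Integrable.of_bound (hm (ch θ)) 1 (Eventually.of_forall fun ω => (ch_norm _ _).le)
  · refine Eventually.of_forall fun ω t _ => ?_
    rw [norm_mul, norm_mul, ch_norm, Complex.norm_I, one_mul, mul_one, Complex.norm_intCast]
    exact_mod_cast hb ω
  · exact Eventually.of_forall fun ω t _ => ch_deriv t (S ω)

lemma int_g [IsProbabilityMeasure P] (h : IsDriving P α μ ξ u g) (he : Measurable e)
    (hpm : ∀ x, e x = 1 ∨ e x = -1) (he0 : ∫ x, (e x : ℂ) ∂μ = 0) (θ : ℝ) (n : ℕ) (hn : 1 ≤ n) :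
    ∫ ω, ch θ (e (g n ω)) ∂P = Complex.cos θ := by
  have : IsProbabilityMeasure μ := by
    rw [← h.g_law n hn]; exact Measure.isProbabilityMeasure_map (h.meas_g n).aemeasurable
  have hm : ∀ F : ℤ → ℂ, Measurable (fun x => F (e x)) := fun F =>
    (measurable_of_countable F).comp he
  have h1 := integral_map (μ := P) (h.meas_g n).aemeasurable (hm (ch θ)).aestronglyMeasurable
  rw [← h1, h.g_law n hn]
  simp_rw [fun x => ch_pm θ (e x) (hpm x)]
  rw [integral_add (integrable_const _), integral_const_mul, he0]
  · simp
  · refine Integrable.const_mul (Integrable.of_bound (hm (fun m => (m : ℂ))).aestronglyMeasurable 1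
      (Eventually.of_forall fun x => ?_)) _
    rcases hpm x with h | h <;> simp [h]

/-- Complex-valued indicator of a Boolean event. -/
def bi (p : Prop) [Decidable p] : ℂ := if p then 1 else 0

lemma int_bi {p : Ω → Prop} [DecidablePred p] (hp : MeasurableSet {ω | p ω}) :
    ∫ ω, bi (p ω) ∂P = ((P.real {ω | p ω} : ℝ) : ℂ) := by
  have : (fun ω => bi (p ω)) = Set.indicator {ω | p ω} (fun _ => (1 : ℂ)) := by
    ext ω; simp [bi, Set.indicator_apply]
  rw [this, integral_indicator_const _ hp]; simp

lemma step [IsProbabilityMeasure P] (h : IsDriving P α μ ξ u g) (hα0 : 0 ≤ α)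
    (he : Measurable e)
    (hpm : ∀ x, e x = 1 ∨ e x = -1) (he0 : ∫ x, (e x : ℂ) ∂μ = 0)
    (hY1 : ∀ ω, Y 1 ω = e (g 1 ω))
    (hYn : ∀ n, 2 ≤ n → ∀ ω, Y n ω = if ξ n ω then Y (u n ω) ω else e (g n ω))
    (θ : ℝ) (n : ℕ) (hn : 1 ≤ n) :
    ∫ ω, ch θ (T Y (n + 1) ω) ∂P =
      Complex.cos θ * ∫ ω, ch θ (T Y n ω) ∂P
      + (α / n) * Complex.sin θ * ∫ ω, Complex.I * (T Y n ω : ℂ) * ch θ (T Y n ω) ∂P := by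
  classical
  set A : Ω → ℂ := fun ω => ch θ (T Y n ω) with hA
  set C : ℕ → Ω → ℂ := fun j ω => ch θ (Y (j + 1) ω) with hC
  set W : ℕ → Ω → ℂ := fun j ω => bi (ξ (n + 1) ω = true) * bi (u (n + 1) ω = j + 1) with hW
  set G : Ω → ℂ := fun ω => bi (ξ (n + 1) ω = false) * ch θ (e (g (n + 1) ω)) with hG
  have hbib : ∀ b : Bool, Measurable (fun x : Bool => bi (x = b)) := fun b =>
    measurable_of_countable _
  have hbin : ∀ b : ℕ, Measurable (fun x : ℕ => bi (x = b)) := fun b =>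
    measurable_of_countable _
  have hchm : Measurable (ch θ) := measurable_of_countable _
  set Past : Set (ℕ ⊕ ℕ ⊕ ℕ) := {i | level i ≤ n} with hPast
  set Fut : Set (ℕ ⊕ ℕ ⊕ ℕ) := {i | level i = n + 1} with hFut
  have hdisj : Disjoint Past Fut := by
    rw [Set.disjoint_left]; intro i hi hi'
    simp only [hPast, hFut, Set.mem_ofPred_eq] at hi hi'; omega
  have hAm : Measurable[Fil ξ u g Past] A := hchm.comp (T_meas h he hY1 hYn n)
  have hCm : ∀ j < n, Measurable[Fil ξ u g Past] (C j) := fun j hj =>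
    hchm.comp (Y_meas h he hY1 hYn n (j + 1) (by omega) (by omega))
  have hWm : ∀ j, Measurable[Fil ξ u g Fut] (W j) := fun j =>
    Measurable.mul ((hbib true).comp (xi_meas_Fil (by simp [hFut, level])))
      ((hbin (j + 1)).comp (u_meas_Fil (by simp [hFut, level])))
  have hGm : Measurable[Fil ξ u g Fut] G :=
    Measurable.mul ((hbib false).comp (xi_meas_Fil (by simp [hFut, level])))
      ((hchm.comp he).comp (g_meas_Fil (by simp [hFut, level])))
  have hxlaw : P.real {ω | ξ (n + 1) ω = true} = α := by
    rw [measureReal_def, h.ξ_law (n + 1) (by omega), ENNReal.toReal_ofReal hα0]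
  have hxm : ∀ b, MeasurableSet {ω | ξ (n + 1) ω = b} := fun b =>
    h.meas_ξ (n + 1) (measurableSet_singleton b)
  have hxlaw' : P.real {ω | ξ (n + 1) ω = false} = 1 - α := by
    rw [← hxlaw, ← probReal_compl_eq_one_sub (hxm true)]
    congr 1; ext ω; simp
  have hsing : Disjoint ({.inl (n + 1)} : Set (ℕ ⊕ ℕ ⊕ ℕ)) {.inr (.inl (n + 1))} := by simp
  have hsing' : Disjoint ({.inl (n + 1)} : Set (ℕ ⊕ ℕ ⊕ ℕ)) {.inr (.inr (n + 1))} := by simp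
  have hWint : ∀ j < n, ∫ ω, W j ω ∂P = α / n := by
    intro j hj
    rw [integral_mul_disj h hsing (f := fun ω => bi (ξ (n + 1) ω = true))
      (k := fun ω => bi (u (n + 1) ω = j + 1))
      ((hbib true).comp (xi_meas_Fil rfl)) ((hbin (j + 1)).comp (u_meas_Fil rfl)),
      int_bi (hxm true), int_bi (p := fun ω => u (n + 1) ω = j + 1)
        (h.meas_u (n + 1) (measurableSet_singleton (j + 1))), hxlaw,
      measureReal_def, h.u_law (n + 1) (by omega) (j + 1) (by omega) (by omega)]
    simp [div_eq_mul_inv]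
  have hGint : ∫ ω, G ω ∂P = (1 - α) * Complex.cos θ := by
    rw [integral_mul_disj h hsing' (f := fun ω => bi (ξ (n + 1) ω = false))
      (k := fun ω => ch θ (e (g (n + 1) ω)))
      ((hbib false).comp (xi_meas_Fil rfl)) ((hchm.comp he).comp (g_meas_Fil rfl)),
      int_bi (hxm false), hxlaw', int_g h he hpm he0 θ _ (by omega)]
    simp
  have hbin1 : ∀ (p : Prop) [Decidable p], ‖bi p‖ ≤ 1 := by
    intro p _; unfold bi; split_ifs <;> simp
  have hpt : ∀ ω, ch θ (T Y (n + 1) ω) =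
      (∑ j ∈ Finset.range n, (A ω * C j ω) * W j ω) + A ω * G ω := by
    intro ω
    have h1 : T Y (n + 1) ω = T Y n ω + Y (n + 1) ω := Finset.sum_range_succ _ _
    rw [h1, ch_add, hYn (n + 1) (by omega) ω]
    obtain ⟨hu1, hu2⟩ := h.u_range (n + 1) (by omega) ω
    cases hx : ξ (n + 1) ω
    · simp [hW, hG, hA, bi, hx]
    · obtain ⟨m, hm⟩ : ∃ m, u (n + 1) ω = m + 1 := ⟨u (n + 1) ω - 1, by omega⟩
      have hmn : m < n := by omega
      simp only [hW, hG, hA, hC, bi, hx, hm]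
      simp [hmn]
  have hle := Fil_le h Past
  have hle' := Fil_le h Fut
  have hAC : ∀ j < n, Integrable (fun ω => A ω * C j ω) P := fun j hj =>
    Integrable.of_bound (((hAm.mono hle le_rfl).mul
      ((hCm j hj).mono hle le_rfl)).aestronglyMeasurable) 1
      (Eventually.of_forall fun ω => by simp [hA, hC, ch_norm])
  have hi1 : ∀ j ∈ Finset.range n, Integrable (fun ω => (A ω * C j ω) * W j ω) P := by
    intro j hj
    rw [Finset.mem_range] at hj
    refine Integrable.of_bound ((((hAm.mono hle le_rfl).mul
      ((hCm j hj).mono hle le_rfl)).mul ((hWm j).mono hle' le_rfl)).aestronglyMeasurable) 1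
      (Eventually.of_forall fun ω => ?_)
    simp only [hA, hC, hW, norm_mul, ch_norm, one_mul]
    exact mul_le_one₀ (hbin1 _) (norm_nonneg _) (hbin1 _)
  have hi2 : Integrable (fun ω => A ω * G ω) P := by
    refine Integrable.of_bound (((hAm.mono hle le_rfl).mul
      (hGm.mono hle' le_rfl)).aestronglyMeasurable) 1 (Eventually.of_forall fun ω => ?_)
    simp only [hA, hG, norm_mul, ch_norm, one_mul, mul_one]
    exact hbin1 _
  have hAint : Integrable A P := Integrable.of_bound (hAm.mono hle le_rfl).aestronglyMeasurable 1
      (Eventually.of_forall fun ω => by simp [hA, ch_norm])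
  have hTAint : Integrable (fun ω => Complex.I * (T Y n ω : ℂ) * A ω) P := by
    refine Integrable.of_bound ((((measurable_of_countable
      (fun m : ℤ => Complex.I * (m : ℂ) * ch θ m)).comp
      ((T_meas h he hY1 hYn n).mono hle le_rfl))).aestronglyMeasurable) n
      (Eventually.of_forall fun ω => ?_)
    rw [norm_mul, norm_mul, ch_norm, Complex.norm_I, one_mul, mul_one, Complex.norm_intCast]
    exact_mod_cast T_bound h hpm hY1 hYn ω n
  have hn0 : (n : ℂ) ≠ 0 := by exact_mod_cast (by omega : n ≠ 0)
  have hsum : ∑ j ∈ Finset.range n, ∫ ω, A ω * C j ω ∂P =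
      n * Complex.cos θ * ∫ ω, A ω ∂P
        + Complex.sin θ * ∫ ω, Complex.I * (T Y n ω : ℂ) * A ω ∂P := by
    rw [← integral_finsetSum _ (fun j hj => hAC j (Finset.mem_range.1 hj)),
      ← integral_const_mul, ← integral_const_mul,
      ← integral_add (hAint.const_mul _) (hTAint.const_mul _)]
    congr 1; ext ω
    rw [← Finset.mul_sum]
    simp only [hC]
    simp_rw [fun j => ch_pm θ (Y (j + 1) ω) (Y_pm h hpm hY1 hYn ω (j + 1) (by omega))]
    rw [Finset.sum_add_distrib, ← Finset.mul_sum]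
    simp only [T, Finset.sum_const, Finset.card_range, nsmul_eq_mul]
    push_cast
    ring
  simp_rw [hpt]
  rw [integral_add (integrable_finsetSum _ hi1) hi2, integral_finsetSum _ hi1,
    integral_mul_disj h hdisj hAm hGm, hGint]
  have h3 : ∀ j ∈ Finset.range n, ∫ ω, (A ω * C j ω) * W j ω ∂P
      = (∫ ω, A ω * C j ω ∂P) * (α / n) := by
    intro j hj
    rw [Finset.mem_range] at hj
    rw [integral_mul_disj h hdisj (f := fun ω => A ω * C j ω) (hAm.mul (hCm j hj)) (hWm j), hWint j hj]
  rw [Finset.sum_congr rfl h3, ← Finset.sum_mul, hsum]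
  field_simp
  ring

lemma main_phi [IsProbabilityMeasure P] (h : IsDriving P α μ ξ u g) (hα0 : 0 ≤ α)
    (he : Measurable e)
    (hpm : ∀ x, e x = 1 ∨ e x = -1) (he0 : ∫ x, (e x : ℂ) ∂μ = 0)
    (hY1 : ∀ ω, Y 1 ω = e (g 1 ω))
    (hYn : ∀ n, 2 ≤ n → ∀ ω, Y n ω = if ξ n ω then Y (u n ω) ω else e (g n ω))
    (n : ℕ) (hn : 1 ≤ n) : ∀ θ : ℝ,
    ∫ ω, ch θ (T Y n ω) ∂P = (((elephantPoly α n).eval (Real.cos θ) : ℝ) : ℂ) := by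
  induction n, hn using Nat.le_induction with
  | base =>
    intro θ
    have := int_g h he hpm he0 θ 1 le_rfl
    simp [T, hY1, elephantPoly, this]
  | succ n hn ih =>
    intro θ
    rw [step h hα0 he hpm he0 hY1 hYn θ n hn]
    have hd := phi_deriv (P := P) ((T_meas h he hY1 hYn n).mono (Fil_le h _) le_rfl) n
      (fun ω => T_bound h hpm hY1 hYn ω n) θ
    have hd2 : HasDerivAt (fun t : ℝ => (((elephantPoly α n).eval (Real.cos t) : ℝ) : ℂ))
        ((((elephantPoly α n).derivative.eval (Real.cos θ) * (-Real.sin θ) : ℝ)) : ℂ) θ :=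
      (((elephantPoly α n).hasDerivAt (Real.cos θ)).comp θ (Real.hasDerivAt_cos θ)).ofReal_comp
    rw [funext ih] at hd
    rw [hd.unique hd2, ih θ]
    obtain ⟨m, rfl⟩ : ∃ m, n = m + 1 := ⟨n - 1, by omega⟩
    have hs : (1 : ℝ) - Real.cos θ ^ 2 = Real.sin θ ^ 2 := by
      rw [Real.sin_sq]
    rw [show elephantPoly α (m + 1 + 1) = Polynomial.X * elephantPoly α (m + 1)
        - Polynomial.C (α / (m + 1)) *
            ((1 - Polynomial.X ^ 2) * Polynomial.derivative (elephantPoly α (m + 1))) from rfl]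
    simp only [eval_sub, eval_mul, eval_X, eval_C, eval_one, eval_pow, hs]
    push_cast
    ring

end helpers

end SRRW

open SRRW

/-- **The SRRW on the cycle `ℤ_L` and the elephant polynomials.**  Let `L ≥ 3`, let `S`
be the usual SRRW on `(ℤ_L, +)` with reinforcement parameter `α ∈ [0,1)` and step
distribution `μ(-1) = μ(1) = 1/2`, and let `(R_n)` be the elephant polynomials with the
same parameter.  Then for every `k ∈ {1, …, L-1}` and every `n ≥ 1`,
`E[exp(2πik S_n / L)] = R_n(cos(2kπ/L))`. -/
theorem srrw_cycle_elephant_poly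
    (L : ℕ) (hL : 3 ≤ L)
    [MeasurableSpace (ZMod L)] [MeasurableSingletonClass (ZMod L)]
    {Ω : Type*} [MeasurableSpace Ω] (P : Measure Ω) [IsProbabilityMeasure P]
    (μ : Measure (ZMod L)) [IsProbabilityMeasure μ]
    (hμ1 : μ {(1 : ZMod L)} = 1 / 2) (hμm1 : μ {(-1 : ZMod L)} = 1 / 2)
    (α : ℝ) (hα0 : 0 ≤ α) (hα1 : α < 1)
    (X : ℕ → Ω → ZMod L) (hX : IsSRRWAdd P α μ X)
    (k : ℕ) (hk1 : 1 ≤ k) (hkL : k ≤ L - 1) (n : ℕ) (hn : 1 ≤ n) :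
    (∫ ω, Complex.exp
        (2 * (Real.pi : ℂ) * (k : ℂ) * ((pos X n ω).val : ℂ) / (L : ℂ) * Complex.I) ∂P)
      = (((elephantPoly α n).eval (Real.cos (2 * k * Real.pi / L)) : ℝ) : ℂ) := by
  classical
  have : NeZero L := ⟨by omega⟩
  obtain ⟨ξ, u, g, h, -, -, hX1, hXn⟩ := hX
  have h1m1 : (1 : ZMod L) ≠ -1 := by
    intro hh
    have h2 : ((2 : ℕ) : ZMod L) = 0 := by
      push_cast
      calc (2 : ZMod L) = 1 + 1 := by norm_num
        _ = 1 + -1 := by rw [← hh]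
        _ = 0 := by simp
    rw [ZMod.natCast_eq_zero_iff] at h2
    have := Nat.le_of_dvd (by norm_num) h2
    omega
  set e : ZMod L → ℤ := fun x => if x = 1 then 1 else -1 with he_def
  have he : Measurable e := measurable_of_countable _
  have hpm : ∀ x, e x = 1 ∨ e x = -1 := by
    intro x; simp only [he_def]; split_ifs <;> simp
  have hr1 : μ.real {(1 : ZMod L)} = 1 / 2 := by simp [measureReal_def, hμ1]
  have he0 : ∫ x, (e x : ℂ) ∂μ = 0 := by
    have hfe : (fun x => (e x : ℂ)) =
        fun x => Set.indicator {(1 : ZMod L)} (fun _ => (2 : ℂ)) x - 1 := by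
      ext x
      by_cases hx : x = 1
      · simp [he_def, hx]; norm_num
      · simp [he_def, hx]
    rw [hfe, integral_sub ((integrable_const _).indicator (measurableSet_singleton _))
      (integrable_const _), integral_indicator_const _ (measurableSet_singleton _), hr1]
    simp
  have hae : ∀ᵐ x ∂μ, ((e x : ℤ) : ZMod L) = x := by
    have hU : μ ({1, -1} : Set (ZMod L))ᶜ = 0 := by
      rw [prob_compl_eq_zero_iff (Set.toFinite _).measurableSet, Set.insert_eq,
        measure_union (by simpa using h1m1) (measurableSet_singleton _), hμ1, hμm1]
      exact ENNReal.add_halves 1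
    rw [ae_iff]
    refine measure_mono_null (fun x hx => ?_) hU
    simp only [Set.mem_ofPred_eq] at hx
    intro hx'
    apply hx
    rcases hx' with rfl | hx'
    · simp [he_def]
    · rw [Set.mem_singleton_iff] at hx'
      subst hx'
      simp [he_def, h1m1.symm]
  have haeg : ∀ᵐ ω ∂P, ∀ n, 1 ≤ n → ((e (g n ω) : ℤ) : ZMod L) = g n ω := by
    rw [ae_all_iff]; intro n
    by_cases hn : 1 ≤ n
    · have h2 := hae
      rw [← h.g_law n hn] at h2
      filter_upwards [ae_of_ae_map (h.meas_g n).aemeasurable h2] with ω hω _ using hω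
    · exact Eventually.of_forall fun ω h => absurd h hn
  set Y : ℕ → Ω → ℤ := fun n ω => e (X n ω) with hY
  have hY1 : ∀ ω, Y 1 ω = e (g 1 ω) := fun ω => by simp only [hY, hX1]
  have hYn : ∀ n, 2 ≤ n → ∀ ω, Y n ω = if ξ n ω then Y (u n ω) ω else e (g n ω) := by
    intro n hn ω
    simp only [hY]
    rw [hXn n hn ω]
    split_ifs <;> rfl
  have hXe : ∀ᵐ ω ∂P, ∀ n, 1 ≤ n → ((Y n ω : ℤ) : ZMod L) = X n ω := by
    filter_upwards [haeg] with ω hω n hn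
    induction n using Nat.strong_induction_on with
    | _ n ih =>
      rcases hn.eq_or_lt with rfl | hn2
      · rw [hY1, hX1]; exact hω 1 le_rfl
      · rw [hYn n hn2, hXn n hn2]
        split_ifs
        · exact ih _ (h.u_range n hn2 ω).2 (h.u_range n hn2 ω).1
        · exact hω n hn
  have hmain := main_phi h hα0 he hpm he0 hY1 hYn n hn (2 * k * Real.pi / L)
  rw [← hmain]
  refine integral_congr_ae ?_
  filter_upwards [hXe] with ω hω
  have hpos : pos X n ω = ((T Y n ω : ℤ) : ZMod L) := by
    simp only [pos, T]
    push_cast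
    exact Finset.sum_congr rfl fun j _ => (hω (j + 1) (by omega)).symm
  have hdvd : (L : ℤ) ∣ T Y n ω - ((pos X n ω).val : ℤ) := by
    rw [← ZMod.intCast_zmod_eq_zero_iff_dvd] 
    push_cast
    rw [ZMod.natCast_zmod_val, hpos, sub_self]
  obtain ⟨c, hc⟩ := hdvd
  have hT : T Y n ω = ((pos X n ω).val : ℤ) + L * c := by linarith
  have hL0 : (L : ℂ) ≠ 0 := by exact_mod_cast (by omega : L ≠ 0)
  rw [ch, hT, Complex.exp_eq_exp_iff_exists_int]
  refine ⟨-(k * c), ?_⟩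
  push_cast
  field_simp
  ring
end
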